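/- arXiv:2510.21234 — 11 statements merged into one kernel-verified Lean document; each statement's English description precedes it below -/
import Mathlib

section
/- Let X be a real Banach space and let C ⊆ X be a bounded, closed and convex subset. Then the set ape(C) of almost preserved extreme points of C is weakly closed, i.e. closed in the weak topology σ(X,X*). -/
/-!
The complement of `ape C` is weakly open. The negation of the slice condition at `x` provides a
weakly open `U` containing `x` and no nonempty slice of `C`; then no point of `U` is an almost
preserved extreme point, so `U` itself misses `ape C`. For `x` outside `C`, Hahn–Banach separates
`x` from the closed convex set `C` by a weakly open half-space.
-/

open Set Metric Topology Bornology

noncomputable section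

/-- The weak topology σ(X, X*) on a normed space X. -/
def weakTop (X : Type*) [NormedAddCommGroup X] [NormedSpace ℝ X] : TopologicalSpace X :=
  TopologicalSpace.induced (fun (x : X) => (fun f : X →L[ℝ] ℝ => f x)) inferInstance

/-- The slice of `C` determined by `f` and `α`. -/
def sliceOf {X : Type*} [NormedAddCommGroup X] [NormedSpace ℝ X]
    (C : Set X) (f : X →L[ℝ] ℝ) (α : ℝ) : Set X :=
  {x ∈ C | sSup ((fun y => f y) '' C) - α < f x}

/-- Almost preserved extreme points of `C`. -/
def ape {X : Type*} [NormedAddCommGroup X] [NormedSpace ℝ X] (C : Set X) : Set X :=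
  {x ∈ C | ∀ U : Set X, IsOpen[weakTop X] U → x ∈ U →
    ∃ (f : X →L[ℝ] ℝ) (α : ℝ), 0 < α ∧ (sliceOf C f α).Nonempty ∧ sliceOf C f α ⊆ U}

theorem weakTop_continuous_eval {X : Type*} [NormedAddCommGroup X] [NormedSpace ℝ X]
    (f : X →L[ℝ] ℝ) : Continuous[weakTop X, inferInstance] (fun x => f x) := by
  have hpi : Continuous fun φ : (X →L[ℝ] ℝ) → ℝ => φ f := continuous_apply f
  exact @Continuous.comp _ _ _ (weakTop X) _ _ (fun (x : X) (g : X →L[ℝ] ℝ) => g x) _ hpi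
    continuous_induced_dom

/-- For a bounded, closed, convex subset `C` of a real Banach space `X`,
the set of almost preserved extreme points of `C` is weakly closed. -/
theorem ape_isWeaklyClosed {X : Type*} [NormedAddCommGroup X] [NormedSpace ℝ X]
    [CompleteSpace X] (C : Set X) (hbdd : Bornology.IsBounded C) (hcl : IsClosed C)
    (hconv : Convex ℝ C) :
    IsClosed[weakTop X] (ape C) := by
  rw [← @isOpen_compl_iff _ _ (weakTop X), @isOpen_iff_forall_mem_open _ (weakTop X)]
  intro x hx
  by_cases hxC : x ∈ C
  · have hx' : ¬ ∀ U : Set X, IsOpen[weakTop X] U → x ∈ U →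
        ∃ (f : X →L[ℝ] ℝ) (α : ℝ), 0 < α ∧ (sliceOf C f α).Nonempty ∧ sliceOf C f α ⊆ U :=
      fun h => hx ⟨hxC, h⟩
    push Not at hx'
    obtain ⟨U, hU, hxU, hno⟩ := hx'
    refine ⟨U, fun y hyU hy => ?_, hU, hxU⟩
    obtain ⟨f, α, hα, hne, hsub⟩ := hy.2 U hU hyU
    exact hno f α hα hne hsub
  · obtain ⟨f, u, hC, hu⟩ := geometric_hahn_banach_closed_point hconv hcl hxC
    exact ⟨{y | u < f y}, fun y hy hyape => (hC y hyape.1).not_gt hy,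
      @Continuous.isOpen_preimage _ _ (weakTop X) _ _ (weakTop_continuous_eval f) _ isOpen_Ioi, hu⟩
end
end

section
/- Let X be an infinite-dimensional real Banach space such that every point of the unit sphere S_X is a preserved extreme point of the closed unit ball B_X. Then every point of B_X is an almost preserved extreme point of B_X, i.e. ape(B_X) = B_X. -/
/-!
Let `x` be in the closed unit ball `B` and let `U` be a weak neighbourhood of `x`, controlled by
finitely many functionals. In infinite dimension these have a common nonzero kernel vector `v`, and
moving from `x` along `v` reaches a point `x'` of the unit sphere at which all these functionals
take the same values as at `x` (`exists_sphere_point`). So it suffices to find a slice of `B`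
inside `U` when `x` is itself a preserved extreme point.

This is Choquet's lemma (`exists_slice`). Let `K` be the weak-star closure of `B` in the bidual.
The points of `K` outside the neighbourhood are covered by finitely many weak-star compact convex
subsets of `K` (intersections with half-spaces), none of which contains `x`. Since `x` is extreme
in `K`, even the convex hull of their union, which is still compact, misses `x`
(`exists_compact_convex_finset`). The trace of this hull on `X` is convex, norm closed and misses
`x`, so Hahn–Banach separates it from `x` by a functional whose slice lies in `U`.
-/

open Set Metric Topology Bornology

noncomputable section

/-- The weak-star topology σ(Y*, Y) on the dual of a normed space Y. -/
def wstarTop (Y : Type*) [NormedAddCommGroup Y] [NormedSpace ℝ Y] :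
    TopologicalSpace (Y →L[ℝ] ℝ) :=
  TopologicalSpace.induced (fun (φ : Y →L[ℝ] ℝ) => (fun y : Y => φ y)) inferInstance

/-- Extreme points of a set, via midpoints. -/
def extPts {E : Type*} [AddCommGroup E] [Module ℝ E] (D : Set E) : Set E :=
  {e ∈ D | ∀ y ∈ D, ∀ z ∈ D, e = (2 : ℝ)⁻¹ • (y + z) → y = e ∧ z = e}

/-- A point of `C` is a preserved extreme point if its canonical image in the bidual is an
extreme point of the weak-star closure of (the canonical image of) `C`. -/
def preservedExtreme {X : Type*} [NormedAddCommGroup X] [NormedSpace ℝ X]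
    (C : Set X) (x : X) : Prop :=
  NormedSpace.inclusionInDoubleDual ℝ X x ∈
    extPts (@closure _ (wstarTop (X →L[ℝ] ℝ))
      ((fun y => NormedSpace.inclusionInDoubleDual ℝ X y) '' C))

section Convexity

variable {E : Type*} [AddCommGroup E] [Module ℝ E]

/-- In a convex set, extremality tested on midpoints is extremality tested on open segments. -/
lemma mem_extremePoints_of_mem_extPts {K : Set E} (hK : Convex ℝ K) {e : E} (he : e ∈ extPts K) :
    e ∈ K.extremePoints ℝ := by
  rw [mem_extremePoints_iff_left]
  refine ⟨he.1, fun a ha b hb hab => ?_⟩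
  obtain ⟨s, t, hs, ht, hst, rfl⟩ := hab
  -- `s • a + t • b` is the midpoint of its translates by `± min s t • (a - b)`, which stay in `K`
  set δ := min s t with hδ
  have hδ0 : 0 < δ := lt_min hs ht
  have h1 := hK ha hb (a := s + δ) (b := t - δ) (by linarith)
    (by linarith [min_le_right s t]) (by linarith)
  have h2 := hK ha hb (a := s - δ) (b := t + δ)
    (by linarith [min_le_left s t]) (by linarith) (by linarith)
  have h3 := (he.2 _ h1 _ h2 (by module)).1
  have h4 : δ • (a - b) = 0 := by
    rw [← sub_eq_zero] at h3
    rw [← h3]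
    module
  have h5 : a = b := by
    rcases smul_eq_zero.1 h4 with h | h
    · exact absurd h hδ0.ne'
    · exact sub_eq_zero.1 h
  subst h5
  rw [← add_smul, hst, one_smul]

variable [TopologicalSpace E] [IsTopologicalAddGroup E] [ContinuousSMul ℝ E]

lemma isCompact_convexJoin {s t : Set E} (hs : IsCompact s) (ht : IsCompact t) :
    IsCompact (convexJoin ℝ s t) := by
  have h : convexJoin ℝ s t =
      (fun p : ℝ × E × E => (1 - p.1) • p.2.1 + p.1 • p.2.2) '' (Icc 0 1 ×ˢ s ×ˢ t) := by
    ext z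
    simp only [mem_convexJoin, segment_eq_image, mem_image, Prod.exists, mem_prod]
    constructor
    · rintro ⟨a, ha, b, hb, θ, hθ, rfl⟩
      exact ⟨θ, a, b, ⟨hθ, ha, hb⟩, rfl⟩
    · rintro ⟨θ, a, b, ⟨hθ, ha, hb⟩, rfl⟩
      exact ⟨a, ha, b, hb, θ, hθ, rfl⟩
  rw [h]
  exact (isCompact_Icc.prod (hs.prod ht)).image (by fun_prop)

lemma exists_compact_convex_pair {K : Set E} (hK : Convex ℝ K) {e : E}
    (he : e ∈ K.extremePoints ℝ) {S T : Set E} (hS : IsCompact S) (hT : IsCompact T)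
    (hSc : Convex ℝ S) (hTc : Convex ℝ T) (hSK : S ⊆ K) (hTK : T ⊆ K) (heS : e ∉ S) (heT : e ∉ T) :
    ∃ D, IsCompact D ∧ Convex ℝ D ∧ D ⊆ K ∧ e ∉ D ∧ S ⊆ D ∧ T ⊆ D := by
  rcases S.eq_empty_or_nonempty with rfl | hSn
  · exact ⟨T, hT, hTc, hTK, heT, empty_subset _, Subset.rfl⟩
  rcases T.eq_empty_or_nonempty with rfl | hTn
  · exact ⟨S, hS, hSc, hSK, heS, Subset.rfl, empty_subset _⟩
  refine ⟨convexJoin ℝ S T, isCompact_convexJoin hS hT, hSc.convexJoin hTc, ?_, ?_,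
    subset_convexJoin_left hTn, subset_convexJoin_right hSn⟩
  · intro z hz
    obtain ⟨a, ha, b, hb, hz⟩ := mem_convexJoin.1 hz
    exact hK.segment_subset (hSK ha) (hTK hb) hz
  · intro hz
    obtain ⟨a, ha, b, hb, hz⟩ := mem_convexJoin.1 hz
    rcases (mem_extremePoints_iff_forall_segment.1 he).2 a (hSK ha) b (hTK hb) hz with h | h
    · exact heS (h ▸ ha)
    · exact heT (h ▸ hb)

/-- Finitely many compact convex subsets of `K` that avoid an extreme point of `K` lie in a single
such subset. -/
lemma exists_compact_convex_finset {K : Set E} (hK : Convex ℝ K) {e : E}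
    (he : e ∈ K.extremePoints ℝ) {ι : Type*} (I : Finset ι) (A : ι → Set E)
    (hA : ∀ i ∈ I, IsCompact (A i) ∧ Convex ℝ (A i) ∧ A i ⊆ K ∧ e ∉ A i) :
    ∃ D, IsCompact D ∧ Convex ℝ D ∧ D ⊆ K ∧ e ∉ D ∧ ∀ i ∈ I, A i ⊆ D := by
  classical
  induction I using Finset.induction_on with
  | empty => exact ⟨∅, isCompact_empty, convex_empty, empty_subset _, by simp, by simp⟩
  | insert i I _ ih =>
    obtain ⟨D, h1, h2, h3, h4, h5⟩ := ih fun j hj => hA j (Finset.mem_insert_of_mem hj)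
    obtain ⟨a1, a2, a3, a4⟩ := hA i (Finset.mem_insert_self _ _)
    obtain ⟨D', k1, k2, k3, k4, k5, k6⟩ :=
      exists_compact_convex_pair hK he h1 a1 h2 a2 h3 a3 h4 a4
    refine ⟨D', k1, k2, k3, k4, fun j hj => ?_⟩
    rcases Finset.mem_insert.1 hj with rfl | hj
    · exact k6
    · exact (h5 j hj).trans k5

end Convexity

section Slices

variable {X : Type*} [NormedAddCommGroup X] [NormedSpace ℝ X]

/-- The bidual of `X` with its weak-star topology. A type synonym of its own, so that the additive
structures appearing in convexity statements all come from one `AddCommGroup` instance. -/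
def WeakBidual (X : Type*) [NormedAddCommGroup X] [NormedSpace ℝ X] : Type _ :=
  (X →L[ℝ] ℝ) →L[ℝ] ℝ

namespace WeakBidual

instance : AddCommGroup (WeakBidual X) := inferInstanceAs (AddCommGroup ((X →L[ℝ] ℝ) →L[ℝ] ℝ))

instance : Module ℝ (WeakBidual X) := inferInstanceAs (Module ℝ ((X →L[ℝ] ℝ) →L[ℝ] ℝ))

instance : TopologicalSpace (WeakBidual X) := wstarTop (X →L[ℝ] ℝ)

instance : IsTopologicalAddGroup (WeakBidual X) :=
  WeakDual.instIsTopologicalAddGroup (𝕜 := ℝ) (E := X →L[ℝ] ℝ)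

instance : ContinuousSMul ℝ (WeakBidual X) :=
  WeakDual.instContinuousSMul (𝕜 := ℝ) (E := X →L[ℝ] ℝ) ℝ

instance : T2Space (WeakBidual X) :=
  WeakDual.instT2Space (𝕜 := ℝ) (E := X →L[ℝ] ℝ)

/-- Evaluation of an element of the bidual at a functional. -/
def pairing (f : X →L[ℝ] ℝ) (φ : WeakBidual X) : ℝ :=
  (show (X →L[ℝ] ℝ) →L[ℝ] ℝ from φ) f

lemma isLinearMap_pairing (f : X →L[ℝ] ℝ) : IsLinearMap ℝ (pairing f) :=
  ⟨fun _ _ => rfl, fun _ _ => rfl⟩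

lemma continuous_pairing (f : X →L[ℝ] ℝ) : Continuous (pairing f) :=
  WeakDual.eval_continuous (𝕜 := ℝ) f

end WeakBidual

open WeakBidual

/-- The canonical embedding of `X` into its bidual with the weak-star topology. -/
def bidualMap (X : Type*) [NormedAddCommGroup X] [NormedSpace ℝ X] : X →ₗ[ℝ] WeakBidual X :=
  (NormedSpace.inclusionInDoubleDual ℝ X).toLinearMap

lemma pairing_bidualMap (x : X) (f : X →L[ℝ] ℝ) : pairing f (bidualMap X x) = f x := rfl

lemma continuous_bidualMap : Continuous (bidualMap X) :=
  continuous_induced_rng.2 (continuous_pi fun f => f.continuous)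

/-- The weak-star closure of the unit ball of `X` in the bidual. -/
def bidualHull (X : Type*) [NormedAddCommGroup X] [NormedSpace ℝ X] : Set (WeakBidual X) :=
  closure (bidualMap X '' closedBall (0 : X) 1)

lemma convex_bidualHull : Convex ℝ (bidualHull X) :=
  ((convex_closedBall (0 : X) 1).linear_image (bidualMap X)).closure

/-- Banach–Alaoglu, as the hull lies in the closed unit ball of the bidual. -/
lemma isCompact_bidualHull : IsCompact (bidualHull X) := by
  let B : Set (WeakBidual X) := @closedBall ((X →L[ℝ] ℝ) →L[ℝ] ℝ) _ 0 1
  have hB : IsCompact B :=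
    WeakDual.isCompact_closedBall (𝕜 := ℝ) (0 : StrongDual ℝ (X →L[ℝ] ℝ)) 1
  refine hB.of_isClosed_subset isClosed_closure (closure_minimal ?_ hB.isClosed)
  rintro _ ⟨y, hy, rfl⟩
  rw [mem_closedBall_zero_iff] at hy
  exact (mem_closedBall_zero_iff (E := (X →L[ℝ] ℝ) →L[ℝ] ℝ)).2
    ((NormedSpace.double_dual_bound ℝ X y).trans hy)

lemma mem_extremePoints_of_preservedExtreme {x : X}
    (h : preservedExtreme (closedBall (0 : X) 1) x) :
    bidualMap X x ∈ (bidualHull X).extremePoints ℝ :=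
  mem_extremePoints_of_mem_extPts convex_bidualHull h

/-- Choquet's lemma: slices of the unit ball are arbitrarily small around a preserved extreme
point, in the weak topology. -/
lemma exists_slice {x : X} (hx : x ∈ closedBall (0 : X) 1)
    (h : preservedExtreme (closedBall (0 : X) 1) x) (F : Finset (X →L[ℝ] ℝ))
    (ε : (X →L[ℝ] ℝ) → ℝ) (hε : ∀ f ∈ F, 0 < ε f) :
    ∃ (g : X →L[ℝ] ℝ) (α : ℝ), 0 < α ∧ (sliceOf (closedBall (0 : X) 1) g α).Nonempty ∧
      ∀ y ∈ sliceOf (closedBall (0 : X) 1) g α, ∀ f ∈ F, |f y - f x| < ε f := by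
  have he := mem_extremePoints_of_preservedExtreme h
  obtain ⟨D₁, a1, a2, a3, a4, a5⟩ := exists_compact_convex_finset convex_bidualHull he F
    (fun f => bidualHull X ∩ {φ | f x + ε f ≤ pairing f φ}) fun f hf =>
      ⟨isCompact_bidualHull.inter_right (isClosed_le continuous_const (continuous_pairing f)),
        convex_bidualHull.inter (convex_halfSpace_ge (isLinearMap_pairing f) _), inter_subset_left,
        fun hm => by
          have := hm.2
          simp only [mem_ofPred_eq, pairing_bidualMap] at this
          linarith [hε f hf]⟩
  obtain ⟨D₂, b1, b2, b3, b4, b5⟩ := exists_compact_convex_finset convex_bidualHull he F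
    (fun f => bidualHull X ∩ {φ | pairing f φ ≤ f x - ε f}) fun f hf =>
      ⟨isCompact_bidualHull.inter_right (isClosed_le (continuous_pairing f) continuous_const),
        convex_bidualHull.inter (convex_halfSpace_le (isLinearMap_pairing f) _), inter_subset_left,
        fun hm => by
          have := hm.2
          simp only [mem_ofPred_eq, pairing_bidualMap] at this
          linarith [hε f hf]⟩
  obtain ⟨D, c1, c2, -, c4, c5, c6⟩ :=
    exists_compact_convex_pair convex_bidualHull he a1 b1 a2 b2 a3 b3 a4 b4
  obtain ⟨g, u, hg, hu⟩ := geometric_hahn_banach_closed_point (c2.linear_preimage (bidualMap X))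
    (c1.isClosed.preimage continuous_bidualMap) c4
  have hbdd : BddAbove ((fun y => g y) '' closedBall (0 : X) 1) := by
    refine ⟨‖g‖, ?_⟩
    rintro _ ⟨y, hy, rfl⟩
    rw [mem_closedBall_zero_iff] at hy
    exact (le_abs_self _).trans (g.unit_le_opNorm y hy)
  have hsup := le_csSup hbdd (mem_image_of_mem _ hx)
  -- with this `α` the slice is `{y ∈ B | u < g y}`
  refine ⟨g, sSup ((fun y => g y) '' closedBall (0 : X) 1) - u, by linarith,
    ⟨x, hx, by linarith⟩, ?_⟩
  rintro y ⟨hyB, hy⟩ f hf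
  have hyD : bidualMap X y ∉ D := fun hm => by linarith [hg y hm]
  have hyK : bidualMap X y ∈ bidualHull X := subset_closure (mem_image_of_mem _ hyB)
  rw [abs_sub_lt_iff]
  constructor
  · by_contra hc
    refine hyD (c5 (a5 f hf ⟨hyK, ?_⟩))
    simp only [mem_ofPred_eq, pairing_bidualMap]
    linarith
  · by_contra hc
    refine hyD (c6 (b5 f hf ⟨hyK, ?_⟩))
    simp only [mem_ofPred_eq, pairing_bidualMap]
    linarith

/-- In infinite dimension, finitely many functionals do not separate a point of the unit ball from
the unit sphere. -/
lemma exists_sphere_point (hinf : ¬ FiniteDimensional ℝ X) {x : X}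
    (hx : x ∈ closedBall (0 : X) 1) (F : Finset (X →L[ℝ] ℝ)) :
    ∃ x' ∈ sphere (0 : X) 1, ∀ f ∈ F, f x' = f x := by
  obtain ⟨v, hv0, hv⟩ : ∃ v : X, v ≠ 0 ∧ ∀ f ∈ F, f v = 0 := by
    by_contra! hc
    refine hinf (FiniteDimensional.of_injective
      (LinearMap.pi fun f : F => (f : X →L[ℝ] ℝ).toLinearMap) ?_)
    rw [← LinearMap.ker_eq_bot, LinearMap.ker_eq_bot']
    intro v hv
    by_contra hv0
    obtain ⟨f, hf, hfv⟩ := hc v hv0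
    exact hfv (congrFun hv ⟨f, hf⟩)
  rw [mem_closedBall_zero_iff] at hx
  have hvn : 0 < ‖v‖ := norm_pos_iff.2 hv0
  have hbig : 1 ≤ ‖x + (2 / ‖v‖) • v‖ := by
    have h1 : ‖(2 / ‖v‖) • v‖ = 2 := by
      rw [norm_smul, Real.norm_of_nonneg (by positivity)]
      field_simp
    have h2 := norm_sub_le (x + (2 / ‖v‖) • v) x
    rw [add_sub_cancel_left, h1] at h2
    linarith
  obtain ⟨t, -, ht⟩ := intermediate_value_Icc (f := fun t : ℝ => ‖x + t • v‖)
    (show (0 : ℝ) ≤ 2 / ‖v‖ by positivity) (by fun_prop)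
    (show (1 : ℝ) ∈ Icc _ _ from ⟨by simpa using hx, hbig⟩)
  exact ⟨x + t • v, mem_sphere_zero_iff_norm.2 ht, fun f hf => by simp [hv f hf]⟩

/-- A weak neighbourhood is controlled by finitely many functionals, with a tolerance for each. -/
lemma exists_finset_of_isOpen_weakTop {U : Set X} (hU : IsOpen[weakTop X] U) {x : X} (hx : x ∈ U) :
    ∃ (F : Finset (X →L[ℝ] ℝ)) (ε : (X →L[ℝ] ℝ) → ℝ), (∀ f ∈ F, 0 < ε f) ∧
      ∀ y, (∀ f ∈ F, |f y - f x| < ε f) → y ∈ U := by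
  obtain ⟨V, hV, rfl⟩ := isOpen_induced_iff.1 hU
  obtain ⟨F, u, hu, hsub⟩ := isOpen_pi_iff.1 hV _ hx
  have hball : ∀ f : X →L[ℝ] ℝ, ∃ r : ℝ, f ∈ F → 0 < r ∧ ball (f x) r ⊆ u f := by
    intro f
    by_cases hf : f ∈ F
    · obtain ⟨r, hr⟩ := Metric.isOpen_iff.1 (hu f hf).1 _ (hu f hf).2
      exact ⟨r, fun _ => hr⟩
    · exact ⟨0, fun h => absurd h hf⟩
  choose ε hε using hball
  refine ⟨F, ε, fun f hf => (hε f hf).1, fun y hy => hsub fun f hf => (hε f hf).2 ?_⟩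
  rw [mem_ball, Real.dist_eq]
  exact hy f hf

end Slices

/-- If `X` is an infinite-dimensional real Banach space such that every point
of the unit sphere is a preserved extreme point of the closed unit ball, then every point of the
closed unit ball is an almost preserved extreme point of it. -/
theorem ape_closedBall_eq_of_sphere_preservedExtreme {X : Type*} [NormedAddCommGroup X]
    [NormedSpace ℝ X] [CompleteSpace X] (hinf : ¬ FiniteDimensional ℝ X)
    (h : ∀ x ∈ Metric.sphere (0 : X) 1, preservedExtreme (Metric.closedBall (0 : X) 1) x) :
    ape (Metric.closedBall (0 : X) 1) = Metric.closedBall (0 : X) 1 := by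
  refine Subset.antisymm (fun x hx => hx.1) fun x hx => ⟨hx, fun U hU hxU => ?_⟩
  obtain ⟨F, ε, hε, hsub⟩ := exists_finset_of_isOpen_weakTop hU hxU
  obtain ⟨x', hx', heq⟩ := exists_sphere_point hinf hx F
  obtain ⟨g, α, hα, hne, hg⟩ := exists_slice (sphere_subset_closedBall hx') (h x' hx') F ε hε
  refine ⟨g, α, hα, hne, fun y hy => hsub y fun f hf => ?_⟩
  rw [← heq f hf]
  exact hg y hy f hf
end
end

section
/- Let X be an infinite-dimensional real Banach space whose norm is locally uniformly rotund (LUR). Then every point of the closed unit ball B_X is an almost preserved extreme point of B_X. -/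
/-!
Weakly open sets in an infinite-dimensional space contain a whole line through each of their points,
so a weakly open set `U` meeting the closed unit ball also contains a point `z` of the unit sphere
(`exists_norm_eq_one_mem`). Local uniform rotundity makes `z` strongly exposed by any norm-one
functional `f` with `f z = 1`: points of the ball at which `f` is close to `1` have midpoints with
`z` of norm close to `1`, hence are close to `z` (`exists_slice_bound`). As `U` is norm open, it
contains a slice of the ball determined by `f`.
-/

open Set Metric Topology Bornology

noncomputable section

theorem isOpen_of_isOpen_weakTop {X : Type*} [NormedAddCommGroup X] [NormedSpace ℝ X]
    {U : Set X} (hU : IsOpen[weakTop X] U) : IsOpen U := by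
  obtain ⟨V, hV, rfl⟩ := isOpen_induced_iff.1 hU
  exact hV.preimage (continuous_pi fun f => f.continuous)

/-- A weakly open set meeting the closed unit ball meets the unit sphere: only finitely many
functionals determine a weak neighbourhood, and they have a common nonzero kernel vector. -/
theorem exists_norm_eq_one_mem {X : Type*} [NormedAddCommGroup X] [NormedSpace ℝ X]
    (hinf : ¬ FiniteDimensional ℝ X) {U : Set X} (hU : IsOpen[weakTop X] U) {x : X}
    (hx : ‖x‖ ≤ 1) (hxU : x ∈ U) : ∃ z ∈ U, ‖z‖ = 1 := by
  obtain ⟨V, hV, rfl⟩ := isOpen_induced_iff.1 hU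
  obtain ⟨I, u, hu, hsub⟩ := isOpen_pi_iff.1 hV _ hxU
  let L : X →ₗ[ℝ] (I → ℝ) := LinearMap.pi fun f => (f : X →L[ℝ] ℝ).toLinearMap
  have hL : ¬ Function.Injective L := fun h => hinf (Module.Finite.of_injective L h)
  rw [injective_iff_map_eq_zero] at hL
  push Not at hL
  obtain ⟨y, hLy, hy⟩ := hL
  have hy' : 0 < ‖y‖ := norm_pos_iff.2 hy
  have hcont : ContinuousOn (fun t : ℝ => ‖x + t • y‖) (Set.Icc 0 (2 / ‖y‖)) := by fun_prop
  have hfar : 1 ≤ ‖x + (2 / ‖y‖) • y‖ := by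
    have h1 : ‖(2 / ‖y‖) • y‖ = 2 := by
      rw [norm_smul, Real.norm_of_nonneg (by positivity)]
      field_simp
    have h2 : ‖(2 / ‖y‖) • y‖ ≤ ‖x + (2 / ‖y‖) • y‖ + ‖x‖ := by
      simpa using norm_sub_le (x + (2 / ‖y‖) • y) x
    linarith
  obtain ⟨t, -, ht⟩ := intermediate_value_Icc (by positivity) hcont
    (show (1 : ℝ) ∈ Set.Icc _ _ from ⟨by simpa using hx, hfar⟩)
  refine ⟨x + t • y, hsub fun f hf => ?_, ht⟩
  have hfy : f y = 0 := congrFun hLy ⟨f, hf⟩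
  simpa [hfy] using (hu f hf).2

/-- In an LUR space, a norm-one functional attaining its norm at `z` strongly exposes `z`. -/
theorem exists_slice_bound {X : Type*} [NormedAddCommGroup X] [NormedSpace ℝ X]
    (hLUR : ∀ (x : X) (xs : ℕ → X),
      Filter.Tendsto (fun n => 2 * ‖x‖ ^ 2 + 2 * ‖xs n‖ ^ 2 - ‖x + xs n‖ ^ 2)
        Filter.atTop (nhds 0) →
      Filter.Tendsto (fun n => ‖xs n - x‖) Filter.atTop (nhds 0))
    {z : X} (hz : ‖z‖ = 1) {f : X →L[ℝ] ℝ} (hf : ‖f‖ = 1) (hfz : f z = 1)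
    {ε : ℝ} (hε : 0 < ε) :
    ∃ α > 0, ∀ w : X, ‖w‖ ≤ 1 → 1 - α < f w → ‖w - z‖ < ε := by
  by_contra! hcon
  choose w hw1 hwf hwε using fun n : ℕ => hcon (1 / ((n : ℝ) + 1)) (by positivity)
  have hlim : Filter.Tendsto (fun n : ℕ => 4 * (1 / ((n : ℝ) + 1))) Filter.atTop (nhds 0) := by
    simpa using (tendsto_one_div_add_atTop_nhds_zero_nat (𝕜 := ℝ)).const_mul 4
  have key := hLUR z w <| squeeze_zero (fun n => ?_) (fun n => ?_) hlim
  · obtain ⟨n, hn⟩ := (key.eventually (gt_mem_nhds hε)).exists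
    exact absurd hn (not_lt.2 (hwε n))
  · nlinarith [norm_add_le z (w n), norm_nonneg (z + w n), sq_nonneg (‖z‖ - ‖w n‖)]
  · have h1 : f (z + w n) ≤ ‖z + w n‖ := by
      simpa [hf] using (le_abs_self _).trans (f.le_opNorm (z + w n))
    rw [map_add, hfz] at h1
    have h2 := hwf n
    have h3 : 1 / ((n : ℝ) + 1) ≤ 1 := by
      rw [div_le_one (by positivity)]
      linarith [(n.cast_nonneg : (0 : ℝ) ≤ n)]
    -- With `δ = 1 / (n + 1)`, the bound is `4 - (2 - δ) ^ 2 ≤ 4 * δ`.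
    have h4 : (2 - 1 / ((n : ℝ) + 1)) ^ 2 ≤ ‖z + w n‖ ^ 2 :=
      pow_le_pow_left₀ (by linarith) (by linarith) 2
    have h5 : ‖w n‖ ^ 2 ≤ 1 := pow_le_one₀ (norm_nonneg _) (hw1 n)
    rw [hz]
    nlinarith [sq_nonneg (1 / ((n : ℝ) + 1))]

/-- If `X` is an infinite-dimensional real Banach space whose norm is locally
uniformly rotund, then every point of the closed unit ball is an almost preserved extreme point
of the closed unit ball. -/
theorem ape_closedBall_of_LUR {X : Type*} [NormedAddCommGroup X] [NormedSpace ℝ X]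
    [CompleteSpace X] (hinf : ¬ FiniteDimensional ℝ X)
    (hLUR : ∀ (x : X) (xs : ℕ → X),
      Filter.Tendsto (fun n => 2 * ‖x‖ ^ 2 + 2 * ‖xs n‖ ^ 2 - ‖x + xs n‖ ^ 2)
        Filter.atTop (nhds 0) →
      Filter.Tendsto (fun n => ‖xs n - x‖) Filter.atTop (nhds 0)) :
    ∀ x ∈ Metric.closedBall (0 : X) 1, x ∈ ape (Metric.closedBall (0 : X) 1) := by
  intro x hx
  refine ⟨hx, fun U hU hxU => ?_⟩
  obtain ⟨z, hzU, hz⟩ := exists_norm_eq_one_mem hinf hU (mem_closedBall_zero_iff.1 hx) hxU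
  obtain ⟨ε, hε, hball⟩ := Metric.isOpen_iff.1 (isOpen_of_isOpen_weakTop hU) z hzU
  obtain ⟨f, hf, hfz⟩ := exists_dual_vector ℝ z (by simp [hz])
  have hfz' : f z = 1 := by simpa [hz] using hfz
  obtain ⟨α, hα, hsl⟩ := exists_slice_bound hLUR hz hf hfz' hε
  have hzB : z ∈ Metric.closedBall (0 : X) 1 := mem_closedBall_zero_iff.2 hz.le
  have hle : ∀ y ∈ Metric.closedBall (0 : X) 1, f y ≤ 1 := fun y hy => by
    have h1 : f y ≤ ‖y‖ := by simpa [hf] using (le_abs_self _).trans (f.le_opNorm y)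
    exact h1.trans (mem_closedBall_zero_iff.1 hy)
  have hsup : sSup ((fun y => f y) '' Metric.closedBall (0 : X) 1) = 1 :=
    IsGreatest.csSup_eq ⟨⟨z, hzB, hfz'⟩, by rintro _ ⟨y, hy, rfl⟩; exact hle y hy⟩
  refine ⟨f, α, hα, ⟨z, hzB, by rw [hsup, hfz']; linarith⟩, ?_⟩
  rintro w ⟨hwB, hw⟩
  rw [hsup] at hw
  exact hball (by rw [Metric.mem_ball, dist_eq_norm]; exact hsl w (mem_closedBall_zero_iff.1 hwB) hw)
end
end

section
/- Let X be a real Banach space, let B ⊆ X be a bounded set and let C = cl(conv(B)) be its closed convex hull. Then every almost preserved extreme point of C belongs to the weak closure of B: ape(C) ⊆ cl_w(B). -/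
open Set Metric Topology Bornology

noncomputable section

/-- Every nonempty slice of the closed convex hull of `B` meets `B`: otherwise `B`, hence also its
closed convex hull, would lie in the closed half-space complementary to the slice. -/
theorem sliceOf_closure_convexHull_inter_nonempty {X : Type*} [NormedAddCommGroup X]
    [NormedSpace ℝ X] {B : Set X} {f : X →L[ℝ] ℝ} {α : ℝ}
    (h : (sliceOf (closure (convexHull ℝ B)) f α).Nonempty) :
    (sliceOf (closure (convexHull ℝ B)) f α ∩ B).Nonempty := by
  obtain ⟨z, hzC, hz⟩ := h
  by_contra hne
  have hB : B ⊆ {x | f x ≤ sSup ((fun y => f y) '' closure (convexHull ℝ B)) - α} := by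
    intro b hb
    by_contra hlt
    exact hne ⟨b, ⟨subset_closure (subset_convexHull ℝ B hb), not_le.mp hlt⟩, hb⟩
  have hC := closure_minimal
    (convexHull_min hB (convex_halfSpace_le f.toLinearMap.isLinear _))
    (isClosed_le f.continuous continuous_const)
  exact absurd (hC hzC) (not_le.mpr hz)

/-- For a bounded set `B` in a real Banach space `X`, every almost preserved
extreme point of the closed convex hull of `B` lies in the weak closure of `B`. -/
theorem ape_subset_weakClosure {X : Type*} [NormedAddCommGroup X] [NormedSpace ℝ X]
    [CompleteSpace X] (B : Set X) (hB : Bornology.IsBounded B) :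
    ape (closure (convexHull ℝ B)) ⊆ @closure _ (weakTop X) B := by
  rintro x ⟨-, hx⟩
  refine (@mem_closure_iff _ (weakTop X) _ _).mpr fun U hU hxU => ?_
  obtain ⟨f, α, -, hne, hsub⟩ := hx U hU hxU
  exact (sliceOf_closure_convexHull_inter_nonempty hne).mono (inter_subset_inter_left B hsub)
end
end

section
/- Let X be a real Banach space, B ⊆ X a bounded set, C = cl(conv(B)) its closed convex hull, and let x ∈ ape(C). Then at least one of the following holds: (1) there exists ε > 0 such that x lies in the weak closure of B \ B(x,ε), i.e. there is a net (y_α) in B with y_α → x weakly and ‖y_α − x‖ ≥ ε for all α; or (2) for every relatively weakly open subset W of C containing x and every ε > 0 there exists a nonempty slice S of C with S ⊆ W and diam(S) < ε. -/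
/-!
If (1) fails then, for each `δ > 0`, some weak neighbourhood of `x` meets `B` only inside
`ball x δ`. Since `x` is an almost preserved extreme point, a slice `S(C, f, α)` lies in this
neighbourhood (and in the given `W`), so points of `B` outside `ball x δ` have `f`-value at most
`M - α`, where `M = sup f(C)`. If `D` bounds `‖b - x‖` on `B`, this implies
`‖y - x‖ ≤ δ + (D / α) * (M - f y)` on `B`. The points satisfying this inequality form a closed
convex set, so it holds on `C` (`norm_sub_le_of_slice`), and it forces the slices `S(C, f, β)`
to have diameter at most `4 * δ` once `β ≤ α * δ / D`.
-/

open Set Metric Topology Bornology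

noncomputable section

/-- An estimate on `B` whose defining inequality is convex and closed extends to the closed convex
hull; it bounds the distance to `x` by the depth below the upper bound `M` of `f`. -/
lemma norm_sub_le_of_slice {X : Type*} [NormedAddCommGroup X] [NormedSpace ℝ X]
    {B : Set X} {x : X} {f : X →L[ℝ] ℝ} {M α δ D : ℝ} (hα : 0 < α) (hδ : 0 ≤ δ) (hD : 0 ≤ D)
    (hM : ∀ b ∈ B, f b ≤ M) (hBD : ∀ b ∈ B, ‖b - x‖ ≤ D)
    (hS : ∀ b ∈ B, M - α < f b → ‖b - x‖ ≤ δ) :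
    ∀ y ∈ closure (convexHull ℝ B), ‖y - x‖ ≤ δ + D / α * (M - f y) := by
  have hc : 0 ≤ D / α := by positivity
  have hclosed : IsClosed {y : X | ‖y - x‖ ≤ δ + D / α * (M - f y)} :=
    isClosed_le (by fun_prop) (by fun_prop)
  have hconv : Convex ℝ {y : X | ‖y - x‖ ≤ δ + D / α * (M - f y)} := by
    intro u hu v hv a b ha hb hab
    simp only [mem_ofPred_eq] at hu hv ⊢
    have e : a • u + b • v - x = a • (u - x) + b • (v - x) := by
      have : x = (a + b) • x := by rw [hab, one_smul]
      nth_rewrite 1 [this]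
      module
    have hn : ‖a • u + b • v - x‖ ≤ a * ‖u - x‖ + b * ‖v - x‖ := by
      rw [e]
      refine (norm_add_le _ _).trans_eq ?_
      rw [norm_smul, norm_smul, Real.norm_of_nonneg ha, Real.norm_of_nonneg hb]
    have h1 := mul_le_mul_of_nonneg_left hu ha
    have h2 := mul_le_mul_of_nonneg_left hv hb
    have e2 : a * (δ + D / α * (M - f u)) + b * (δ + D / α * (M - f v))
        = δ + D / α * (M - f (a • u + b • v)) := by
      obtain rfl : b = 1 - a := by linarith
      simp only [map_add, map_smul, smul_eq_mul]
      ring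
    linarith
  suffices hsub : B ⊆ {y : X | ‖y - x‖ ≤ δ + D / α * (M - f y)} from
    fun y hy => closure_minimal (convexHull_min hsub hconv) hclosed hy
  intro b hb
  simp only [mem_ofPred_eq]
  rcases lt_or_ge (M - α) (f b) with h | h
  · have := mul_nonneg hc (sub_nonneg.2 (hM b hb))
    linarith [hS b hb h]
  · have h3 : D / α * α ≤ D / α * (M - f b) := mul_le_mul_of_nonneg_left (by linarith) hc
    rw [div_mul_cancel₀ _ hα.ne'] at h3
    linarith [hBD b hb]

/-- Let `B` be a bounded subset of a real Banach space `X`, let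
`C = closure (convexHull ℝ B)` and let `x` be an almost preserved extreme point of `C`. Then
either (1) there is `ε > 0` such that `x` lies in the weak closure of `B \ ball x ε`, or
(2) every relatively weakly open subset of `C` containing `x` contains nonempty slices of `C`
of arbitrarily small diameter. -/
theorem ape_alternative {X : Type*} [NormedAddCommGroup X] [NormedSpace ℝ X]
    [CompleteSpace X] (B : Set X) (hB : Bornology.IsBounded B) (x : X)
    (hx : x ∈ ape (closure (convexHull ℝ B))) :
    (∃ ε > 0, x ∈ @closure _ (weakTop X) (B \ Metric.ball x ε)) ∨
    (∀ W : Set X, IsOpen[weakTop X] W → x ∈ W → ∀ ε > 0,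
      ∃ (f : X →L[ℝ] ℝ) (α : ℝ), 0 < α ∧
        (sliceOf (closure (convexHull ℝ B)) f α).Nonempty ∧
        sliceOf (closure (convexHull ℝ B)) f α ⊆ W ∧
        Metric.diam (sliceOf (closure (convexHull ℝ B)) f α) < ε) := by
  by_cases h1 : ∃ ε > 0, x ∈ @closure _ (weakTop X) (B \ Metric.ball x ε)
  · exact Or.inl h1
  right
  intro W hW hxW ε hε
  push Not at h1
  set C := closure (convexHull ℝ B) with hC
  have hBC : B ⊆ C := (subset_convexHull ℝ B).trans subset_closure
  have hCb : Bornology.IsBounded C := ((isBounded_convexHull).2 hB).closure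
  have hxV := h1 (ε / 5) (by positivity)
  obtain ⟨f, α, hα, -, hSU⟩ := hx.2
    ((@closure _ (weakTop X) (B \ Metric.ball x (ε / 5)))ᶜ ∩ W)
    (@IsOpen.inter _ (weakTop X) _ _
      ((@isOpen_compl_iff _ _ (weakTop X)).2 (@isClosed_closure _ (weakTop X) _)) hW) ⟨hxV, hxW⟩
  set M := sSup ((fun y => f y) '' C) with hMdef
  have hbdd : BddAbove ((fun y => f y) '' C) := (f.lipschitz.isBounded_image hCb).bddAbove
  have hM : ∀ y ∈ C, f y ≤ M := fun y hy => le_csSup hbdd ⟨y, hy, rfl⟩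
  obtain ⟨D, hD, hBD⟩ : ∃ D > 0, ∀ b ∈ B, ‖b - x‖ ≤ D := by
    obtain ⟨r, hr⟩ := hB.subset_closedBall x
    refine ⟨max r 1, by positivity, fun b hb => ?_⟩
    rw [← dist_eq_norm]
    exact (hr hb).trans (le_max_left _ _)
  have key := norm_sub_le_of_slice (x := x) (δ := ε / 5) hα (by positivity) hD.le
    (fun b hb => hM b (hBC hb)) hBD (fun b hb hfb => by
      by_contra hcon
      refine (hSU ⟨hBC hb, hfb⟩).1 (@subset_closure _ (weakTop X) _ _ ⟨hb, fun hball => hcon ?_⟩)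
      rw [Metric.mem_ball, dist_eq_norm] at hball
      exact hball.le)
  have hβ : 0 < min α (α * (ε / 5) / D) := by positivity
  refine ⟨f, min α (α * (ε / 5) / D), hβ, ?_, ?_, ?_⟩
  · obtain ⟨_, ⟨y, hy, rfl⟩, hlt⟩ := exists_lt_of_lt_csSup
      (Set.Nonempty.image (fun y => f y) ⟨x, hx.1⟩) (sub_lt_self M hβ)
    exact ⟨y, hy, hlt⟩
  · intro y hy
    refine (hSU ⟨hy.1, ?_⟩).2
    have := hy.2
    have := min_le_left α (α * (ε / 5) / D)
    linarith
  · have hnear : ∀ y ∈ sliceOf C f (min α (α * (ε / 5) / D)), dist y x ≤ 2 * (ε / 5) := by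
      intro y hy
      have h2 := hy.2
      have h3 := min_le_right α (α * (ε / 5) / D)
      have h4 : D / α * (M - f y) ≤ D / α * (α * (ε / 5) / D) :=
        mul_le_mul_of_nonneg_left (by linarith) (by positivity)
      have h5 : D / α * (α * (ε / 5) / D) = ε / 5 := by field_simp
      rw [dist_eq_norm]
      linarith [key y hy.1]
    have hdiam : Metric.diam (sliceOf C f (min α (α * (ε / 5) / D))) ≤ 4 * (ε / 5) := by
      refine Metric.diam_le_of_forall_dist_le (by positivity) fun y hy z hz => ?_
      have := dist_triangle_right y z x
      linarith [hnear y hy, hnear z hz]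
    linarith
end
end

section
/- Let X be a real Banach space, C ⊆ X a nonempty closed, convex and bounded subset, x ∈ C, J : X → X** the canonical isometric embedding into the bidual, and let D be the weak* closure of J(C) in X**. Then the following are equivalent: (1) x ∈ ape(C); (2) for every relatively weak* open subset W of D containing J(x) there exists a nonempty weak* slice S of D, i.e. S = {z ∈ D : z(f) > sup_{w∈D} w(f) − α} for some f ∈ X* and α > 0, with S ⊆ W; (3) J(x) lies in the weak* closure of the set ext(D) of extreme points of D. -/
/-! The three conditions are compared inside the bidual with its weak* topology, a Hausdorff locally
convex space in which `D` is compact (Banach–Alaoglu) and convex, and whose continuous functionals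
are exactly the evaluations at elements of `X*`.

* `ape C` versus weak* slices of `D`: the weak topology of `X` is induced by `J` from the weak*
  topology, the suprema of `f` over `C` and over `D` agree, and the slice of `D` given by `f, α`
  lies in the weak* closure of the image of the slice of `C` given by `f, α`. Regularity of the
  weak* topology absorbs this closure.
* Weak* slices versus extreme points: a slice of a compact set contains the face on which the
  functional attains its maximum, hence an extreme point by the Krein–Milman lemma
  (`exists_extremePoint_max`). Conversely, slices form a neighbourhood base at an extreme point
  (Choquet's lemma, `exists_halfSpace_of_extremePoint`).
-/

open Set Metric Topology Bornology

noncomputable section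

/-- The weak-star slice of a subset `D` of the dual of `Y` determined by `f : Y` and `α > 0`. -/
def wsliceOf {Y : Type*} [NormedAddCommGroup Y] [NormedSpace ℝ Y]
    (D : Set (Y →L[ℝ] ℝ)) (f : Y) (α : ℝ) : Set (Y →L[ℝ] ℝ) :=
  {z ∈ D | sSup ((fun w : Y →L[ℝ] ℝ => w f) '' D) - α < z f}

/-- The canonical embedding of `X` into its bidual. -/
def bidualJ (X : Type*) [NormedAddCommGroup X] [NormedSpace ℝ X] (x : X) :
    (X →L[ℝ] ℝ) →L[ℝ] ℝ :=
  NormedSpace.inclusionInDoubleDual ℝ X x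

section LocallyConvex

variable {E : Type*} [AddCommGroup E] [Module ℝ E]

/-- For a convex set, the midpoint definition of extreme points agrees with Mathlib's, which uses
arbitrary open segments. -/
theorem extPts_eq_extremePoints {D : Set E} (hD : Convex ℝ D) :
    extPts D = D.extremePoints ℝ := by
  have key : ∀ e ∈ D, (∀ y ∈ D, ∀ z ∈ D, e = (2 : ℝ)⁻¹ • (y + z) → y = e ∧ z = e) →
      ∀ y ∈ D, ∀ z ∈ D, ∀ a b : ℝ, 0 < a → 0 < b → a + b = 1 → a ≤ b → a • y + b • z = e →
        y = e := by
    intro e _ h y hy z hz a b ha hb hab hle he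
    -- `e` is the midpoint of `z` and of another point of the segment from `y` to `z`
    have hw : (2 * a) • y + (2 * b - 1) • z ∈ D :=
      hD hy hz (by linarith) (by linarith) (by linarith)
    have hz' : z = e := by
      refine (h _ hw z hz ?_).2
      rw [← he]
      module
    have h1 : a • y = a • e := by
      have : a • y = e - b • z := by rw [← he]; abel
      rw [this, hz', eq_sub_of_add_eq hab]
      module
    exact smul_right_injective E ha.ne' h1
  ext e
  rw [mem_extremePoints]
  constructor
  · rintro ⟨heD, h⟩
    refine ⟨heD, fun y hy z hz hseg => ?_⟩
    obtain ⟨a, b, ha, hb, hab, he⟩ := hseg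
    rcases le_total a b with hle | hle
    · have hye := key e heD h y hy z hz a b ha hb hab hle he
      refine ⟨hye, ?_⟩
      have h1 : b • z = b • e := by
        have : b • z = e - a • y := by rw [← he]; abel
        rw [this, hye, eq_sub_of_add_eq' hab]
        module
      exact smul_right_injective E hb.ne' h1
    · have hze := key e heD h z hz y hy b a hb ha (by linarith) hle (by rw [← he, add_comm])
      refine ⟨?_, hze⟩
      have h1 : a • y = a • e := by
        have : a • y = e - b • z := by rw [← he]; abel
        rw [this, hze, eq_sub_of_add_eq hab]
        module
      exact smul_right_injective E ha.ne' h1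
  · rintro ⟨heD, h⟩
    refine ⟨heD, fun y hy z hz he => h y hy z hz ?_⟩
    exact ⟨2⁻¹, 2⁻¹, by norm_num, by norm_num, by norm_num, by rw [he, smul_add]⟩

variable [TopologicalSpace E] [IsTopologicalAddGroup E] [ContinuousSMul ℝ E]

theorem isCompact_convexJoin_s5 {K L : Set E} (hK : IsCompact K) (hL : IsCompact L) :
    IsCompact (convexJoin ℝ K L) := by
  have h : convexJoin ℝ K L =
      (fun p : E × E × ℝ => p.1 + p.2.2 • (p.2.1 - p.1)) '' (K ×ˢ L ×ˢ Icc (0 : ℝ) 1) := by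
    ext x
    simp only [mem_convexJoin, segment_eq_image', mem_image, mem_prod, Prod.exists]
    constructor
    · rintro ⟨a, ha, b, hb, t, ht, rfl⟩
      exact ⟨a, b, t, ⟨ha, hb, ht⟩, rfl⟩
    · rintro ⟨a, b, t, ⟨ha, hb, ht⟩, rfl⟩
      exact ⟨a, ha, b, hb, t, ht, rfl⟩
  rw [h]
  exact (hK.prod (hL.prod isCompact_Icc)).image (by fun_prop)

variable [T2Space E] [LocallyConvexSpace ℝ E]

/-- A compact set missing an extreme point `e` of the compact convex set `D` can be enclosed in a
compact convex subset of `D` missing `e`: this holds locally by Hahn–Banach, and passes to finite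
unions because a segment in `D` through `e` has `e` as an endpoint. -/
theorem exists_compact_convex_of_extremePoint {D : Set E} (hDc : IsCompact D) (hDv : Convex ℝ D)
    {e : E} (he : e ∈ D.extremePoints ℝ) {B : Set E} (hB : IsCompact B) (hBD : B ⊆ D)
    (heB : e ∉ B) : ∃ K, IsCompact K ∧ Convex ℝ K ∧ K ⊆ D ∧ e ∉ K ∧ B ⊆ K := by
  refine hB.induction_on
    (p := fun S => ∃ K, IsCompact K ∧ Convex ℝ K ∧ K ⊆ D ∧ e ∉ K ∧ S ⊆ K) ?_ ?_ ?_ ?_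
  · exact ⟨∅, isCompact_empty, convex_empty, empty_subset _, notMem_empty _, Subset.rfl⟩
  · rintro s t hst ⟨K, h1, h2, h3, h4, h5⟩
    exact ⟨K, h1, h2, h3, h4, hst.trans h5⟩
  · rintro s t ⟨K, h1, h2, h3, h4, h5⟩ ⟨L, g1, g2, g3, g4, g5⟩
    -- `convexJoin` with an empty set is empty, so these cases are separate
    rcases K.eq_empty_or_nonempty with rfl | hK
    · exact ⟨L, g1, g2, g3, g4, union_subset (h5.trans (empty_subset _)) g5⟩
    rcases L.eq_empty_or_nonempty with rfl | hL
    · exact ⟨K, h1, h2, h3, h4, union_subset h5 (g5.trans (empty_subset _))⟩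
    refine ⟨convexJoin ℝ K L, isCompact_convexJoin_s5 h1 g1, h2.convexJoin g2,
      convexJoin_subset h3 g3 hDv, fun hmem => ?_,
      union_subset (h5.trans (subset_convexJoin_left hL))
        (g5.trans (subset_convexJoin_right hK))⟩
    obtain ⟨a, ha, b, hb, hab⟩ := mem_convexJoin.1 hmem
    rcases (mem_extremePoints_iff_forall_segment.1 he).2 a (h3 ha) b (g3 hb) hab with h | h
    · exact h4 (h ▸ ha)
    · exact g4 (h ▸ hb)
  · intro x hx
    have hne : e ≠ x := fun h => heB (h ▸ hx)
    obtain ⟨f, hf⟩ := geometric_hahn_banach_point_point hne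
    obtain ⟨c, hc1, hc2⟩ := exists_between hf
    refine ⟨B ∩ {y | c < f y}, ?_, D ∩ {y | c ≤ f y}, ?_, ?_, inter_subset_left, ?_, ?_⟩
    · exact inter_mem_nhdsWithin _ ((isOpen_lt continuous_const f.continuous).mem_nhds hc2)
    · exact hDc.inter_right (isClosed_le continuous_const f.continuous)
    · exact hDv.inter (convex_halfSpace_ge f.isLinear c)
    · exact fun h => not_le.2 hc1 h.2
    · rintro y ⟨hyB, hyc⟩
      exact ⟨hBD hyB, le_of_lt (show c < f y from hyc)⟩

/-- **Choquet's lemma**: open half-spaces cut out a neighbourhood base of `D` at each of its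
extreme points. -/
theorem exists_halfSpace_of_extremePoint {D : Set E} (hDc : IsCompact D) (hDv : Convex ℝ D)
    {e : E} (he : e ∈ D.extremePoints ℝ) {W : Set E} (hW : IsOpen W) (heW : e ∈ W) :
    ∃ (f : E →L[ℝ] ℝ) (u : ℝ), u < f e ∧ ∀ z ∈ D, u < f z → z ∈ W := by
  obtain ⟨K, hKc, hKv, -, heK, hBK⟩ := exists_compact_convex_of_extremePoint hDc hDv he
    (hDc.diff hW) sdiff_subset (fun h => h.2 heW)
  obtain ⟨f, u, hfu, hue⟩ := geometric_hahn_banach_closed_point hKv hKc.isClosed heK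
  refine ⟨f, u, hue, fun z hz huz => ?_⟩
  by_contra hzW
  exact lt_asymm huz (hfu z (hBK ⟨hz, hzW⟩))

/-- A continuous functional on a nonempty compact set attains its maximum at an extreme point. -/
theorem exists_extremePoint_max {D : Set E} (hDc : IsCompact D) (hDn : D.Nonempty)
    (f : E →L[ℝ] ℝ) : ∃ e ∈ D.extremePoints ℝ, ∀ z ∈ D, f z ≤ f e := by
  have hexp : IsExposed ℝ D (f.toExposed D) := ContinuousLinearMap.toExposed.isExposed
  obtain ⟨m, hm, hmax⟩ := hDc.exists_isMaxOn hDn f.continuous.continuousOn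
  obtain ⟨e, he⟩ := (hexp.isCompact hDc).extremePoints_nonempty ⟨m, hm, hmax⟩
  exact ⟨e, hexp.isExtreme.extremePoints_subset_extremePoints he, (extremePoints_subset he).2⟩

end LocallyConvex

section Bidual

variable {X : Type*} [NormedAddCommGroup X] [NormedSpace ℝ X]

/-- The canonical embedding into the bidual, the latter carrying its weak* topology. -/
def weakJ (X : Type*) [NormedAddCommGroup X] [NormedSpace ℝ X] :
    X →ₗ[ℝ] WeakDual ℝ (X →L[ℝ] ℝ) :=
  StrongDual.toWeakDual.toLinearMap ∘ₗ (NormedSpace.inclusionInDoubleDual ℝ X).toLinearMap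

theorem weakTop_eq_induced :
    weakTop X = TopologicalSpace.induced (weakJ X) inferInstance := by
  refine Eq.trans ?_ induced_compose.symm
  rfl

theorem isCompact_closure_weakJ {C : Set X} (hC : IsBounded C) :
    IsCompact (closure (weakJ X '' C)) := by
  have hb' : IsBounded ((fun y => NormedSpace.inclusionInDoubleDual ℝ X y) '' C) := by
    obtain ⟨R, hR⟩ := isBounded_iff_forall_norm_le.1 hC
    refine isBounded_iff_forall_norm_le.2 ⟨R, ?_⟩
    rintro _ ⟨y, hy, rfl⟩
    exact (NormedSpace.double_dual_bound ℝ X y).trans (hR y hy)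
  have hb : IsBounded (weakJ X '' C) := by
    refine (WeakDual.isBounded_toStrongDual_preimage_iff_isBounded.2 hb').subset ?_
    rintro _ ⟨y, hy, rfl⟩
    exact ⟨y, hy, rfl⟩
  exact WeakDual.isCompact_of_bounded_of_closed (WeakDual.isBounded_closure hb) isClosed_closure

/-- Weak* continuous functionals on a dual space are evaluations. -/
theorem exists_eval_eq {Y : Type*} [NormedAddCommGroup Y] [NormedSpace ℝ Y]
    (g : WeakDual ℝ Y →L[ℝ] ℝ) : ∃ y : Y, ∀ z : WeakDual ℝ Y, g z = z y := by
  obtain ⟨y, hy⟩ := LinearMap.dualEmbedding_surjective (topDualPairing ℝ Y) g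
  exact ⟨y, fun z => (DFunLike.congr_fun hy z).symm⟩

instance instLocallyConvexSpaceWeakDual {Y : Type*} [NormedAddCommGroup Y] [NormedSpace ℝ Y] :
    LocallyConvexSpace ℝ (WeakDual ℝ Y) :=
  WeakBilin.locallyConvexSpace (B := topDualPairing ℝ Y)

/-- The evaluation functional at `y`, continuous for the weak* topology. -/
def evalCLM {Y : Type*} [NormedAddCommGroup Y] [NormedSpace ℝ Y] (y : Y) :
    WeakDual ℝ Y →L[ℝ] ℝ :=
  WeakBilin.eval (topDualPairing ℝ Y) y

/-- The characterisation, with the bidual written as a `WeakDual`. -/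
theorem ape_tfae_weakDual (C : Set X) (hne : C.Nonempty) (hconv : Convex ℝ C)
    (hbdd : IsBounded C) (x : X) (hx : x ∈ C) (D : Set (WeakDual ℝ (X →L[ℝ] ℝ)))
    (hD : D = closure (weakJ X '' C)) :
    List.TFAE [
      x ∈ ape C,
      ∀ W : Set (WeakDual ℝ (X →L[ℝ] ℝ)), IsOpen W → weakJ X x ∈ W →
        ∃ (f : X →L[ℝ] ℝ) (α : ℝ), 0 < α ∧
          {z ∈ D | sSup ((fun w : WeakDual ℝ (X →L[ℝ] ℝ) => w f) '' D) - α < z f}.Nonempty ∧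
          {z ∈ D | sSup ((fun w : WeakDual ℝ (X →L[ℝ] ℝ) => w f) '' D) - α < z f} ⊆ W,
      weakJ X x ∈ closure (extPts D)] := by
  have hDc : IsCompact D := hD ▸ isCompact_closure_weakJ hbdd
  have hDv : Convex ℝ D := hD ▸ Convex.closure (E := WeakDual ℝ (X →L[ℝ] ℝ)) (hconv.linear_image (weakJ X))
  have hCD : ∀ y ∈ C, weakJ X y ∈ D := fun y hy => hD ▸ subset_closure (mem_image_of_mem _ hy)
  have hDn : D.Nonempty := ⟨_, hCD x hx⟩
  have heval : ∀ f : X →L[ℝ] ℝ, Continuous fun w : WeakDual ℝ (X →L[ℝ] ℝ) => w f :=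
    fun f => WeakDual.eval_continuous f
  have hbD : ∀ f : X →L[ℝ] ℝ, BddAbove ((fun w : WeakDual ℝ (X →L[ℝ] ℝ) => w f) '' D) :=
    fun f => (hDc.image (heval f)).bddAbove
  have hsub : ∀ f : X →L[ℝ] ℝ, (fun y => f y) '' C ⊆
      (fun w : WeakDual ℝ (X →L[ℝ] ℝ) => w f) '' D := by
    rintro f _ ⟨y, hy, rfl⟩
    exact ⟨weakJ X y, hCD y hy, rfl⟩
  have hsup : ∀ f : X →L[ℝ] ℝ, sSup ((fun w : WeakDual ℝ (X →L[ℝ] ℝ) => w f) '' D) =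
      sSup ((fun y => f y) '' C) := by
    intro f
    apply le_antisymm
    · refine csSup_le (hDn.image _) ?_
      rintro _ ⟨w, hw, rfl⟩
      have hcl : IsClosed {w : WeakDual ℝ (X →L[ℝ] ℝ) | w f ≤ sSup ((fun y => f y) '' C)} :=
        isClosed_le (heval f) continuous_const
      rw [hD] at hw
      refine closure_minimal ?_ hcl hw
      rintro _ ⟨y, hy, rfl⟩
      exact le_csSup ((hbD f).mono (hsub f)) (mem_image_of_mem _ hy)
    · exact csSup_le_csSup (hbD f) (hne.image _) (hsub f)
  rw [extPts_eq_extremePoints hDv]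
  tfae_have 1 → 2 := by
    rintro ⟨-, h⟩ W hW hxW
    obtain ⟨V, hVx, hVc, hVW⟩ := exists_mem_nhds_isClosed_subset (hW.mem_nhds hxW)
    obtain ⟨f, α, hα, ⟨y, hy⟩, hS⟩ := h (weakJ X ⁻¹' interior V)
      (by rw [weakTop_eq_induced]; exact isOpen_induced isOpen_interior)
      (mem_interior_iff_mem_nhds.2 hVx)
    refine ⟨f, α, hα, ⟨weakJ X y, hCD y hy.1, ?_⟩, ?_⟩
    · rw [hsup]
      exact hy.2
    · rintro z ⟨hzD, hz⟩
      rw [hsup] at hz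
      -- near `z` only points of the slice of `C` contribute to the closure defining `D`
      have hz' : z ∈ closure (weakJ X '' sliceOf C f α) := by
        rw [_root_.mem_closure_iff]
        intro O hO hzO
        rw [hD, _root_.mem_closure_iff] at hzD
        obtain ⟨_, ⟨hO', hlt⟩, y', hy', rfl⟩ := hzD
          (O ∩ {w : WeakDual ℝ (X →L[ℝ] ℝ) | sSup ((fun y => f y) '' C) - α < w f})
          (hO.inter (isOpen_lt continuous_const (heval f))) ⟨hzO, hz⟩
        exact ⟨_, hO', y', ⟨hy', hlt⟩, rfl⟩
      refine hVW (closure_minimal ?_ hVc hz')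
      rintro _ ⟨y', hy', rfl⟩
      exact interior_subset (hS hy')
  tfae_have 2 → 1 := by
    intro h
    refine ⟨hx, fun U hU hxU => ?_⟩
    rw [weakTop_eq_induced] at hU
    obtain ⟨W, hW, rfl⟩ := isOpen_induced_iff.1 hU
    obtain ⟨f, α, hα, -, hS⟩ := h W hW hxU
    rw [hsup] at hS
    refine ⟨f, α, hα, ?_, fun y hy => hS ⟨hCD y hy.1, hy.2⟩⟩
    obtain ⟨_, ⟨y, hy, rfl⟩, hlt⟩ := exists_lt_of_lt_csSup (hne.image (fun y => f y))
      (sub_lt_self (sSup ((fun y => f y) '' C)) hα)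
    exact ⟨y, hy, hlt⟩
  tfae_have 2 → 3 := by
    intro h
    rw [_root_.mem_closure_iff]
    intro W hW hxW
    obtain ⟨f, α, hα, ⟨z, hz⟩, hS⟩ := h W hW hxW
    obtain ⟨e, he, hmax⟩ := exists_extremePoint_max hDc hDn (evalCLM f)
    exact ⟨e, hS ⟨he.1, hz.2.trans_le (hmax z hz.1)⟩, he⟩
  tfae_have 3 → 2 := by
    intro h W hW hxW
    obtain ⟨e, heW, he⟩ := _root_.mem_closure_iff.1 h W hW hxW
    obtain ⟨g, u, hue, hg⟩ := exists_halfSpace_of_extremePoint hDc hDv he hW heW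
    obtain ⟨f, hf⟩ := exists_eval_eq g
    have hle : e f ≤ sSup ((fun w : WeakDual ℝ (X →L[ℝ] ℝ) => w f) '' D) :=
      le_csSup (hbD f) (mem_image_of_mem _ he.1)
    rw [hf] at hue
    refine ⟨f, sSup ((fun w : WeakDual ℝ (X →L[ℝ] ℝ) => w f) '' D) - u,
      sub_pos.2 (hue.trans_le hle), ?_⟩
    rw [sub_sub_cancel]
    exact ⟨⟨e, he.1, hue⟩, fun z hz => hg z hz.1 (by rw [hf]; exact hz.2)⟩
  tfae_finish

end Bidual

/-- Characterisation of almost preserved extreme points via the bidual: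
for `C` nonempty closed convex bounded and `x ∈ C`, with `D` the weak-star closure of the
canonical image of `C` in the bidual, the following are equivalent: (1) `x ∈ ape C`;
(2) every relatively weak-star open subset of `D` containing `J x` contains a nonempty
weak-star slice of `D`; (3) `J x` lies in the weak-star closure of the extreme points of `D`. -/
theorem ape_iff_bidual_char {X : Type*} [NormedAddCommGroup X] [NormedSpace ℝ X]
    [CompleteSpace X] (C : Set X) (hne : C.Nonempty) (hcl : IsClosed C) (hconv : Convex ℝ C)
    (hbdd : Bornology.IsBounded C) (x : X) (hx : x ∈ C)
    (D : Set ((X →L[ℝ] ℝ) →L[ℝ] ℝ))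
    (hD : D = @closure _ (wstarTop (X →L[ℝ] ℝ)) (bidualJ X '' C)) :
    List.TFAE [
      x ∈ ape C,
      ∀ W : Set ((X →L[ℝ] ℝ) →L[ℝ] ℝ), IsOpen[wstarTop (X →L[ℝ] ℝ)] W → bidualJ X x ∈ W →
        ∃ (f : X →L[ℝ] ℝ) (α : ℝ), 0 < α ∧ (wsliceOf D f α).Nonempty ∧ wsliceOf D f α ⊆ W,
      bidualJ X x ∈ @closure _ (wstarTop (X →L[ℝ] ℝ)) (extPts D)] := by
  exact ape_tfae_weakDual C hne hconv hbdd x hx D hD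
end
end

section
/- Let K be a compact Hausdorff topological space and let C(K) be the real Banach space of continuous real-valued functions on K with the supremum norm. For f in the closed unit ball B_{C(K)} the following are equivalent: (1) f is an almost preserved extreme point of B_{C(K)}; (2) |f(t)| = 1 for every t ∈ K; (3) f is an extreme point of B_{C(K)}; (4) f is a preserved extreme point of B_{C(K)}. -/
/-!
The argument is elementary and uses no representing measures.

* If `|f| = 1` everywhere, every functional `φ` on `C(K)` splits as `φ = ψ₁ - ψ₂` where both `ψ₁`
  and `ψ₂` attain their norm at `f` up to `ε` (`exists_sub_almost_normed`): if `v` almost norms `φ`,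
  take `ψ₁ u = φ (u (1 + f v) / 2)` and `ψ₂ u = -φ (u (1 - f v) / 2)`. This is an approximate
  Jordan decomposition relative to the sign function `f`.
* Consequently, if `f` is the midpoint of `y`, `z` in the unit ball of the bidual, then `y` and `z`
  agree with `f` up to `ε` on `ψ₁` and `ψ₂`, hence exactly on every `φ`: `f` is a preserved extreme
  point. Likewise, the sum of all parts of finitely many functionals determines a slice contained
  in a prescribed weak neighbourhood of `f`: `f` is an APEP.
* Conversely, let `|f t| < 1`. The weakly open set `{g | |g t| < 1}` contains no nonempty slice:
  any `g` of the ball with `|g t| < 1` is a convex combination of members `h₁`, `h₂` of the ball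
  with `h₁ t = 1` and `h₂ t = -1` (`exists_convex_split`), and one of these lies in the slice. The
  function `f` is not extreme either, being the midpoint of `f + (1 - |f|)` and `f - (1 - |f|)`.
-/

open Set Metric Topology Bornology

noncomputable section

section Helpers

variable {K : Type*} [TopologicalSpace K] [CompactSpace K]

lemma mem_unitBall_iff (g : C(K, ℝ)) :
    g ∈ Metric.closedBall (0 : C(K, ℝ)) 1 ↔ ∀ t, |g t| ≤ 1 := by
  rw [mem_closedBall_zero_iff, ContinuousMap.norm_le _ zero_le_one]
  simp only [Real.norm_eq_abs]

lemma apply_le_norm_of_mem_unitBall (φ : C(K, ℝ) →L[ℝ] ℝ) {g : C(K, ℝ)}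
    (hg : g ∈ Metric.closedBall (0 : C(K, ℝ)) 1) : φ g ≤ ‖φ‖ := by
  have h1 := φ.le_opNorm g
  have h2 := mem_closedBall_zero_iff.1 hg
  have h3 := le_abs_self (φ g)
  rw [Real.norm_eq_abs] at h1
  nlinarith [norm_nonneg φ]

/-- A functional is bounded in norm by any one-sided bound on the unit ball. -/
lemma norm_le_of_forall_unitBall (φ : C(K, ℝ) →L[ℝ] ℝ) {c : ℝ}
    (h : ∀ g ∈ Metric.closedBall (0 : C(K, ℝ)) 1, φ g ≤ c) : ‖φ‖ ≤ c := by
  have h0 : 0 ≤ c := by simpa using h 0 (by simp)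
  refine ContinuousLinearMap.opNorm_le_of_unit_norm h0 fun g hg => ?_
  rw [Real.norm_eq_abs, abs_le]
  have h1 := h g (by simp [hg])
  have h2 := h (-g) (by simp [hg])
  rw [map_neg] at h2
  constructor <;> linarith

lemma exists_almost_norming (φ : C(K, ℝ) →L[ℝ] ℝ) {ε : ℝ} (hε : 0 < ε) :
    ∃ v ∈ Metric.closedBall (0 : C(K, ℝ)) 1, ‖φ‖ - ε ≤ φ v := by
  by_contra! h
  have := norm_le_of_forall_unitBall φ fun g hg => (h g hg).le
  linarith

/-- The functional `u ↦ φ (u (1 + f v) / 2)`. If `|f| = 1` and `v` almost norms `φ`, it is the part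
of `φ` with the same sign as `f`. -/
def signPart (f v : C(K, ℝ)) (φ : C(K, ℝ) →L[ℝ] ℝ) : C(K, ℝ) →L[ℝ] ℝ :=
  φ.comp (ContinuousLinearMap.mul ℝ C(K, ℝ) ((2 : ℝ)⁻¹ • (1 + f * v)))

lemma signPart_apply (f v : C(K, ℝ)) (φ : C(K, ℝ) →L[ℝ] ℝ) (u : C(K, ℝ)) :
    signPart f v φ u = φ ((2 : ℝ)⁻¹ • (1 + f * v) * u) := rfl

lemma norm_signPart_le {f v : C(K, ℝ)} (hf : ∀ t, |f t| = 1)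
    (hv : v ∈ Metric.closedBall (0 : C(K, ℝ)) 1) (φ : C(K, ℝ) →L[ℝ] ℝ) {ε : ℝ}
    (h : ‖φ‖ - ε ≤ φ v) : ‖signPart f v φ‖ ≤ signPart f v φ f + ε := by
  refine norm_le_of_forall_unitBall _ fun u hu => ?_
  -- `u (1 + f v) / 2 - f (1 - f v) / 2` is a combination of `u` and `f` with coefficients of total
  -- mass one, so it lies in the ball; and `-f (1 - f v) / 2 = v - f (1 + f v) / 2` since `f ^ 2 = 1`.
  have hw : (2 : ℝ)⁻¹ • (1 + f * v) * u + (v - (2 : ℝ)⁻¹ • (1 + f * v) * f) ∈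
      Metric.closedBall (0 : C(K, ℝ)) 1 := by
    rw [mem_unitBall_iff] at hu hv ⊢
    intro t
    have hut := abs_le.1 (hu t)
    have hvt := abs_le.1 (hv t)
    simp only [ContinuousMap.add_apply, ContinuousMap.sub_apply, ContinuousMap.mul_apply,
      ContinuousMap.smul_apply, ContinuousMap.one_apply, smul_eq_mul]
    rw [abs_le]
    rcases eq_or_eq_neg_of_abs_eq (hf t) with ht | ht <;> rw [ht] <;>
      constructor <;> nlinarith
  have h1 := apply_le_norm_of_mem_unitBall φ hw
  rw [map_add, map_sub] at h1
  rw [signPart_apply, signPart_apply]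
  linarith

lemma exists_sub_almost_normed {f : C(K, ℝ)} (hf : ∀ t, |f t| = 1) (φ : C(K, ℝ) →L[ℝ] ℝ)
    {ε : ℝ} (hε : 0 < ε) :
    ∃ ψ₁ ψ₂ : C(K, ℝ) →L[ℝ] ℝ, φ = ψ₁ - ψ₂ ∧ ‖ψ₁‖ ≤ ψ₁ f + ε ∧ ‖ψ₂‖ ≤ ψ₂ f + ε := by
  obtain ⟨v, hv, h⟩ := exists_almost_norming φ hε
  refine ⟨signPart f v φ, signPart f (-v) (-φ), ?_, norm_signPart_le hf hv φ h,
    norm_signPart_le hf (by simpa using hv) (-φ) ?_⟩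
  swap
  · have hn : ‖-φ‖ = ‖φ‖ := norm_neg φ
    simpa [hn] using h
  ext u
  rw [sub_apply, signPart_apply, signPart_apply, neg_apply,
    sub_neg_eq_add, ← map_add]
  congr 1
  ext t
  simp only [ContinuousMap.add_apply, ContinuousMap.mul_apply, ContinuousMap.neg_apply,
      ContinuousMap.smul_apply, ContinuousMap.one_apply, smul_eq_mul]
  ring

lemma exists_convex_split {g : C(K, ℝ)} (hg : g ∈ Metric.closedBall (0 : C(K, ℝ)) 1) {t : K}
    (ht : |g t| < 1) :
    ∃ h₁ ∈ Metric.closedBall (0 : C(K, ℝ)) 1, ∃ h₂ ∈ Metric.closedBall (0 : C(K, ℝ)) 1,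
      h₁ t = 1 ∧ h₂ t = -1 ∧ ∃ l : ℝ, 0 < l ∧ l < 1 ∧ g = l • h₁ + (1 - l) • h₂ := by
  obtain ⟨hl, hr⟩ := abs_lt.1 ht
  rw [mem_unitBall_iff] at hg
  -- The weight `l` is forced by the values at `t`; `u` is the largest function for which
  -- `g + (1 - l) u` and `g - l u` both stay in the ball.
  obtain ⟨l, hldef⟩ : ∃ l : ℝ, l = (1 + g t) / 2 := ⟨_, rfl⟩
  have hl0 : 0 < l := by linarith
  have hl1 : 0 < 1 - l := by linarith
  obtain ⟨u, hu⟩ : ∃ u : C(K, ℝ), ∀ s, u s = min ((1 - g s) / (1 - l)) ((1 + g s) / l) :=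
    ⟨⟨fun s => min ((1 - g s) / (1 - l)) ((1 + g s) / l), by fun_prop⟩, fun _ => rfl⟩
  have hu0 : ∀ s, 0 ≤ u s := fun s => by
    have := abs_le.1 (hg s)
    rw [hu]
    exact le_min (div_nonneg (by linarith) hl1.le) (div_nonneg (by linarith) hl0.le)
  have hu1 : ∀ s, (1 - l) * u s ≤ 1 - g s := fun s => by
    rw [mul_comm, ← le_div_iff₀ hl1, hu]; exact min_le_left _ _
  have hu2 : ∀ s, l * u s ≤ 1 + g s := fun s => by
    rw [mul_comm, ← le_div_iff₀ hl0, hu]; exact min_le_right _ _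
  have hut : u t = 2 := by
    have e1 : (1 - g t) / (1 - l) = 2 := by rw [div_eq_iff hl1.ne']; linarith
    have e2 : (1 + g t) / l = 2 := by rw [div_eq_iff hl0.ne']; linarith
    rw [hu, e1, e2, min_self]
  refine ⟨g + (1 - l) • u, ?_, g - l • u, ?_, ?_, ?_, l, hl0, by linarith, ?_⟩
  · rw [mem_unitBall_iff]
    intro s
    have := abs_le.1 (hg s)
    have h1 := hu1 s
    have h2 := mul_nonneg hl1.le (hu0 s)
    simp only [ContinuousMap.add_apply, ContinuousMap.smul_apply, smul_eq_mul]
    rw [abs_le]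
    constructor <;> linarith
  · rw [mem_unitBall_iff]
    intro s
    have := abs_le.1 (hg s)
    have h1 := hu2 s
    have h2 := mul_nonneg hl0.le (hu0 s)
    simp only [ContinuousMap.sub_apply, ContinuousMap.smul_apply, smul_eq_mul]
    rw [abs_le]
    constructor <;> linarith
  · simp only [ContinuousMap.add_apply, ContinuousMap.smul_apply, smul_eq_mul, hut]
    linarith
  · simp only [ContinuousMap.sub_apply, ContinuousMap.smul_apply, smul_eq_mul, hut]
    linarith
  · ext s
    simp only [ContinuousMap.add_apply, ContinuousMap.sub_apply, ContinuousMap.smul_apply,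
      smul_eq_mul]
    ring

lemma bddAbove_image_unitBall (φ : C(K, ℝ) →L[ℝ] ℝ) :
    BddAbove ((fun y => φ y) '' Metric.closedBall (0 : C(K, ℝ)) 1) :=
  ⟨‖φ‖, by rintro _ ⟨g, hg, rfl⟩; exact apply_le_norm_of_mem_unitBall φ hg⟩

lemma continuous_weakTop_apply (φ : C(K, ℝ) →L[ℝ] ℝ) :
    @Continuous _ _ (weakTop C(K, ℝ)) _ (fun g => φ g) := by
  have h : Continuous fun p : (C(K, ℝ) →L[ℝ] ℝ) → ℝ => p φ := continuous_apply φ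
  exact @Continuous.comp _ _ _ (weakTop C(K, ℝ)) _ _
    (fun g : C(K, ℝ) => fun ψ : C(K, ℝ) →L[ℝ] ℝ => ψ g) _ h continuous_induced_dom

lemma abs_eq_one_of_mem_ape {f : C(K, ℝ)} (hf : f ∈ ape (Metric.closedBall (0 : C(K, ℝ)) 1))
    (t : K) : |f t| = 1 := by
  by_contra hne
  have hlt : |f t| < 1 := lt_of_le_of_ne ((mem_unitBall_iff f).1 hf.1 t) hne
  have hopen : IsOpen[weakTop C(K, ℝ)] {g : C(K, ℝ) | |g t| < 1} := by
    have hc := continuous_weakTop_apply (ContinuousMap.evalCLM ℝ t : C(K, ℝ) →L[ℝ] ℝ)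
    let := weakTop C(K, ℝ)
    exact isOpen_lt hc.abs continuous_const
  obtain ⟨φ, α, hα, ⟨g, hg, hgα⟩, hsub⟩ := hf.2 _ hopen hlt
  obtain ⟨h₁, hh₁, h₂, hh₂, e₁, e₂, l, hl0, hl1, hgl⟩ := exists_convex_split hg (hsub ⟨hg, hgα⟩)
  have hφ : φ g = l * φ h₁ + (1 - l) * φ h₂ := by
    rw [hgl]; simp
  rcases le_total (φ g) (φ h₁) with h | h
  · have : |h₁ t| < 1 := hsub ⟨hh₁, hgα.trans_le h⟩
    simp [e₁] at this
  · have h' : φ g ≤ φ h₂ := by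
      by_contra! hc
      nlinarith
    have : |h₂ t| < 1 := hsub ⟨hh₂, hgα.trans_le h'⟩
    simp [e₂] at this

lemma mem_ape_of_abs_eq_one {f : C(K, ℝ)} (hf : ∀ t, |f t| = 1) :
    f ∈ ape (Metric.closedBall (0 : C(K, ℝ)) 1) := by
  have hfB : f ∈ Metric.closedBall (0 : C(K, ℝ)) 1 :=
    (mem_unitBall_iff f).2 fun t => (hf t).le
  refine ⟨hfB, fun U hU hfU => ?_⟩
  obtain ⟨V, hV, rfl⟩ := isOpen_induced_iff.1 hU
  obtain ⟨I, u, hu, hIV⟩ := isOpen_pi_iff.1 hV _ hfU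
  obtain ⟨δ, hδI, hδ⟩ : ∃ δ : ℝ, (∀ φ ∈ I, Metric.ball (φ f) δ ⊆ u φ) ∧ 0 < δ := by
    have h1 : ∀ᶠ δ in 𝓝[>] (0 : ℝ), ∀ φ ∈ I, Metric.ball (φ f) δ ⊆ u φ := by
      rw [Filter.eventually_all_finset]
      intro φ hφ
      obtain ⟨r, hr, hrs⟩ := Metric.isOpen_iff.1 (hu φ hφ).1 _ (hu φ hφ).2
      filter_upwards [Ioo_mem_nhdsGT hr] with δ hδ
      exact (Metric.ball_subset_ball hδ.2.le).trans hrs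
    exact (h1.and self_mem_nhdsWithin).exists
  obtain ⟨ε, hε, hεδ⟩ : ∃ ε : ℝ, 0 < ε ∧ 2 * (I.card : ℝ) * ε ≤ δ / 2 := by
    refine ⟨δ / (4 * (I.card + 1)), by positivity, ?_⟩
    rw [mul_div_assoc', div_le_iff₀ (by positivity)]
    nlinarith
  choose ψ₁ ψ₂ hψ hψ₁ hψ₂ using fun φ => exists_sub_almost_normed hf φ hε
  refine ⟨∑ φ ∈ I, (ψ₁ φ + ψ₂ φ), δ / 2, by positivity, ?_, ?_⟩
  · obtain ⟨_, ⟨g, hg, rfl⟩, hlt⟩ := exists_lt_of_lt_csSup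
      (s := (fun y => (∑ φ ∈ I, (ψ₁ φ + ψ₂ φ)) y) '' Metric.closedBall (0 : C(K, ℝ)) 1)
      ⟨_, f, hfB, rfl⟩ (sub_lt_self _ (half_pos hδ))
    exact ⟨g, hg, hlt⟩
  · rintro g ⟨hg, hgα⟩
    have hsup := le_csSup (bddAbove_image_unitBall (∑ φ ∈ I, (ψ₁ φ + ψ₂ φ))) ⟨f, hfB, rfl⟩
    refine hIV fun φ hφ => hδI φ hφ ?_
    -- Each defect `ψ f + ε - ψ g` is nonnegative, and on the slice their sum is less than `δ`.
    have hd₁ : ∀ φ, 0 ≤ ψ₁ φ f + ε - ψ₁ φ g := fun φ => by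
      linarith [hψ₁ φ, apply_le_norm_of_mem_unitBall (ψ₁ φ) hg]
    have hd₂ : ∀ φ, 0 ≤ ψ₂ φ f + ε - ψ₂ φ g := fun φ => by
      linarith [hψ₂ φ, apply_le_norm_of_mem_unitBall (ψ₂ φ) hg]
    have hsingle := Finset.single_le_sum
      (f := fun φ => (ψ₁ φ f + ε - ψ₁ φ g) + (ψ₂ φ f + ε - ψ₂ φ g))
      (fun φ _ => add_nonneg (hd₁ φ) (hd₂ φ)) hφ
    have hsum : ∑ φ ∈ I, ((ψ₁ φ f + ε - ψ₁ φ g) + (ψ₂ φ f + ε - ψ₂ φ g)) =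
        (∑ φ ∈ I, (ψ₁ φ + ψ₂ φ)) f - (∑ φ ∈ I, (ψ₁ φ + ψ₂ φ)) g + 2 * (I.card : ℝ) * ε := by
      simp only [sum_apply, add_apply,
        Finset.sum_add_distrib, Finset.sum_sub_distrib, Finset.sum_const, nsmul_eq_mul]
      ring
    have hφg : φ g = ψ₁ φ g - ψ₂ φ g := by
      conv_lhs => rw [hψ φ]
      rfl
    have hφf : φ f = ψ₁ φ f - ψ₂ φ f := by
      conv_lhs => rw [hψ φ]
      rfl
    have h1 := hd₁ φ
    have h2 := hd₂ φ
    simp only at hsingle hsup hgα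
    rw [Metric.mem_ball, Real.dist_eq, abs_lt]
    constructor <;> linarith

/-- The weak-star closure of the ball of `C(K)` lies in the unit ball of the bidual. -/
lemma apply_le_norm_of_mem_closure {y : (C(K, ℝ) →L[ℝ] ℝ) →L[ℝ] ℝ}
    (hy : y ∈ @closure _ (wstarTop (C(K, ℝ) →L[ℝ] ℝ))
      ((fun g => NormedSpace.inclusionInDoubleDual ℝ C(K, ℝ) g) ''
        Metric.closedBall (0 : C(K, ℝ)) 1)) (φ : C(K, ℝ) →L[ℝ] ℝ) : y φ ≤ ‖φ‖ := by
  let := wstarTop (C(K, ℝ) →L[ℝ] ℝ)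
  have hc : Continuous fun y : (C(K, ℝ) →L[ℝ] ℝ) →L[ℝ] ℝ => y φ :=
    (continuous_apply φ).comp continuous_induced_dom
  refine closure_minimal (t := {y : (C(K, ℝ) →L[ℝ] ℝ) →L[ℝ] ℝ | y φ ≤ ‖φ‖}) ?_
    (isClosed_le hc continuous_const) hy
  rintro _ ⟨g, hg, rfl⟩
  exact apply_le_norm_of_mem_unitBall φ hg

/-- If `|f| = 1` everywhere and `f` is the midpoint of `y` and `z` in the unit ball of the bidual,
then `y = f`. -/
lemma eq_inclusion_of_midpoint {f : C(K, ℝ)} (hf : ∀ t, |f t| = 1)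
    {y z : (C(K, ℝ) →L[ℝ] ℝ) →L[ℝ] ℝ} (hy : ∀ φ, y φ ≤ ‖φ‖) (hz : ∀ φ, z φ ≤ ‖φ‖)
    (h : ∀ φ : C(K, ℝ) →L[ℝ] ℝ, φ f = 2⁻¹ * (y φ + z φ)) :
    y = NormedSpace.inclusionInDoubleDual ℝ C(K, ℝ) f := by
  ext φ
  rw [NormedSpace.dual_def]
  refine eq_of_abs_sub_le_all fun ε hε => ?_
  obtain ⟨ψ₁, ψ₂, rfl, h₁, h₂⟩ := exists_sub_almost_normed hf φ (half_pos hε)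
  rw [map_sub, sub_apply, abs_le]
  constructor <;>
    linarith [hy ψ₁, hy ψ₂, hz ψ₁, hz ψ₂, h ψ₁, h ψ₂]

lemma preservedExtreme_of_abs_eq_one {f : C(K, ℝ)} (hf : ∀ t, |f t| = 1) :
    preservedExtreme (Metric.closedBall (0 : C(K, ℝ)) 1) f := by
  refine ⟨?_, fun y hy z hz hyz => ?_⟩
  · let := wstarTop (C(K, ℝ) →L[ℝ] ℝ)
    exact subset_closure ⟨f, (mem_unitBall_iff f).2 fun t => (hf t).le, rfl⟩
  · have h : ∀ φ : C(K, ℝ) →L[ℝ] ℝ, φ f = 2⁻¹ * (y φ + z φ) := fun φ => by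
      rw [← NormedSpace.dual_def ℝ C(K, ℝ) f φ, hyz]
      rfl
    have hy' := apply_le_norm_of_mem_closure hy
    have hz' := apply_le_norm_of_mem_closure hz
    exact ⟨eq_inclusion_of_midpoint hf hy' hz' h,
      eq_inclusion_of_midpoint hf hz' hy' fun φ => by rw [h φ, add_comm]⟩

lemma mem_extPts_of_preservedExtreme {f : C(K, ℝ)}
    (hfB : f ∈ Metric.closedBall (0 : C(K, ℝ)) 1)
    (hf : preservedExtreme (Metric.closedBall (0 : C(K, ℝ)) 1) f) :
    f ∈ extPts (Metric.closedBall (0 : C(K, ℝ)) 1) := by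
  have hinj : Function.Injective (NormedSpace.inclusionInDoubleDual ℝ C(K, ℝ)) :=
    (NormedSpace.inclusionInDoubleDualLi ℝ (E := C(K, ℝ))).injective
  refine ⟨hfB, fun y hy z hz hyz => ?_⟩
  let := wstarTop (C(K, ℝ) →L[ℝ] ℝ)
  have h := hf.2 _ (subset_closure ⟨y, hy, rfl⟩) _ (subset_closure ⟨z, hz, rfl⟩)
    (by rw [hyz, map_smul, map_add])
  exact ⟨hinj h.1, hinj h.2⟩

lemma abs_eq_one_of_mem_extPts {f : C(K, ℝ)}
    (hf : f ∈ extPts (Metric.closedBall (0 : C(K, ℝ)) 1)) (t : K) : |f t| = 1 := by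
  have hfB := (mem_unitBall_iff f).1 hf.1
  have h := hf.2 (f + (1 - |f|)) ?_ (f - (1 - |f|)) ?_ ?_
  · have := DFunLike.congr_fun h.1 t
    simp only [ContinuousMap.add_apply, ContinuousMap.sub_apply, ContinuousMap.one_apply,
      ContinuousMap.abs_apply] at this
    linarith
  · rw [mem_unitBall_iff]
    intro s
    have h1 := hfB s
    have h2 := le_abs_self (f s)
    have h3 := neg_abs_le (f s)
    simp only [ContinuousMap.add_apply, ContinuousMap.sub_apply, ContinuousMap.one_apply,
      ContinuousMap.abs_apply]
    rw [abs_le]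
    constructor <;> linarith
  · rw [mem_unitBall_iff]
    intro s
    have h1 := hfB s
    have h2 := le_abs_self (f s)
    have h3 := neg_abs_le (f s)
    simp only [ContinuousMap.sub_apply, ContinuousMap.one_apply, ContinuousMap.abs_apply]
    rw [abs_le]
    constructor <;> linarith
  · ext s
    simp only [ContinuousMap.add_apply, ContinuousMap.sub_apply, ContinuousMap.one_apply,
      ContinuousMap.abs_apply, ContinuousMap.smul_apply, smul_eq_mul]
    ring

end Helpers

/-- For `f` in the closed unit ball of `C(K)` (`K` compact Hausdorff), the
following are equivalent: (1) `f` is an almost preserved extreme point of the ball;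
(2) `|f t| = 1` for every `t ∈ K`; (3) `f` is an extreme point of the ball; (4) `f` is a
preserved extreme point of the ball. -/
theorem ape_closedBall_continuousMap_char {K : Type*} [TopologicalSpace K] [CompactSpace K]
    [T2Space K] (f : C(K, ℝ)) (hf : f ∈ Metric.closedBall (0 : C(K, ℝ)) 1) :
    List.TFAE [
      f ∈ ape (Metric.closedBall (0 : C(K, ℝ)) 1),
      ∀ t : K, |f t| = 1,
      f ∈ extPts (Metric.closedBall (0 : C(K, ℝ)) 1),
      preservedExtreme (Metric.closedBall (0 : C(K, ℝ)) 1) f] := by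
  tfae_have 1 → 2 := abs_eq_one_of_mem_ape
  tfae_have 2 → 1 := mem_ape_of_abs_eq_one
  tfae_have 2 → 4 := preservedExtreme_of_abs_eq_one
  tfae_have 4 → 3 := mem_extPts_of_preservedExtreme hf
  tfae_have 3 → 2 := abs_eq_one_of_mem_extPts
  tfae_finish
end
end

section
/- Let (Ω,Σ,μ) be a σ-finite measure space and let L∞(μ) be the real Banach space of (equivalence classes of) essentially bounded measurable functions on Ω with the essential supremum norm. Then f in the closed unit ball B_{L∞(μ)} is an almost preserved extreme point of B_{L∞(μ)} if and only if |f(ω)| = 1 for μ-almost every ω ∈ Ω. -/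
/-!
Both implications are elementary consequences of the pointwise structure of `L∞(μ)`.

*Unimodular functions are APEPs.* Let `|f| = 1` a.e. and let a basic weak neighbourhood of `f` be
given by functionals `φ ∈ I` and `ε > 0`. For each `φ` choose `s` in the unit ball with
`φ s ≥ ‖φ‖ - δ`. For `g` in the ball put `h = (1 - f g) / 2 ∈ [0, 1]`; then `(1 - h) s ± h f` lies
in the ball, and comparing its value under `φ` with `‖φ‖ ≤ φ s + δ` gives
`|φ (f - g)| ≤ φ (s f (f - g)) + 2 δ` (`abs_apply_sub_le`). Hence the functional
`ψ g = ∑ φ (s_φ f g)` controls all `φ ∈ I` simultaneously, and a slice of `ψ` lies in the given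
neighbourhood. This plays the role of the positive functional `∑ |φ|`.

*APEPs are unimodular.* If `|f| ≤ r < 1` on a set of positive measure, take an ultrafilter finer
than the a.e. filter and containing this set. The limit along it is a continuous functional `χ` on
`L∞(μ)` (`exists_ultrafilter_limit`), and `|χ f| ≤ r`, so `{g | |χ g| < 1}` is a weak neighbourhood
of `f`. It contains no slice: if `x` is in a slice, replacing `x` by the constants `1` and `-1` on
the set where `x` is close to `χ x` gives two functions at which `χ` equals `±1`, and `x` is nearly
a convex combination of the two, so one of them is in the slice.
-/

open Set Metric Topology Bornology

noncomputable section

open MeasureTheory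

namespace ApeLinfty

open Filter

variable {Ω : Type*} [MeasurableSpace Ω] {μ : Measure Ω}

/-! ### Norm and multiplication on `L∞(μ)` -/

lemma ae_abs_le_norm (g : Lp ℝ ⊤ μ) : ∀ᵐ ω ∂μ, |g ω| ≤ ‖g‖ := by
  have h := ae_le_eLpNormEssSup (f := g) (μ := μ)
  filter_upwards [h] with ω hω
  rw [← eLpNorm_exponent_top] at hω
  have := ENNReal.toReal_mono (Lp.eLpNorm_ne_top g) hω
  simpa [Lp.norm_def] using this

lemma norm_le_of_ae_abs_le (g : Lp ℝ ⊤ μ) {C : ℝ} (hC : 0 ≤ C) (h : ∀ᵐ ω ∂μ, |g ω| ≤ C) :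
    ‖g‖ ≤ C := by
  rw [Lp.norm_def, eLpNorm_exponent_top]
  refine ENNReal.toReal_le_of_le_ofReal hC ?_
  exact eLpNormEssSup_le_of_ae_bound h

/-- Pointwise multiplication on `L∞(μ)`, as a continuous bilinear map. -/
def mulLinfty (μ : Measure Ω) : Lp ℝ ⊤ μ →L[ℝ] Lp ℝ ⊤ μ →L[ℝ] Lp ℝ ⊤ μ :=
  (ContinuousLinearMap.mul ℝ ℝ).holderL μ ⊤ ⊤ ⊤

lemma coeFn_mulLinfty (f g : Lp ℝ ⊤ μ) : ∀ᵐ ω ∂μ, mulLinfty μ f g ω = f ω * g ω := by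
  have h := (ContinuousLinearMap.mul ℝ ℝ).coeFn_holder (r := ⊤) f g
  filter_upwards [h] with ω hω
  exact hω

lemma apply_le_norm (φ : Lp ℝ ⊤ μ →L[ℝ] ℝ) {e : Lp ℝ ⊤ μ} (he : ‖e‖ ≤ 1) : φ e ≤ ‖φ‖ :=
  (le_abs_self _).trans (φ.unit_le_opNorm e he)

/-! ### Unimodular functions are almost preserved extreme points -/

/-- If `σ` is `1` or `-1`, the function `(1 - h) s + σ h f` with `h = (1 - f g) / 2` is in the unit
ball; since `|f| = 1`, here `h = f (f - g) / 2` and `h f = (f - g) / 2`. -/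
lemma norm_comb_le {f g s : Lp ℝ ⊤ μ} (hf : ∀ᵐ ω ∂μ, |f ω| = 1) (hg : ‖g‖ ≤ 1) (hs : ‖s‖ ≤ 1)
    {σ : ℝ} (hσ : |σ| = 1) :
    ‖s - (1 / 2 : ℝ) • mulLinfty μ s (mulLinfty μ f (f - g)) + (σ / 2) • (f - g)‖ ≤ 1 := by
  refine norm_le_of_ae_abs_le _ zero_le_one ?_
  filter_upwards [hf, ae_abs_le_norm g, ae_abs_le_norm s,
    coeFn_mulLinfty s (mulLinfty μ f (f - g)), coeFn_mulLinfty f (f - g), Lp.coeFn_sub f g,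
    Lp.coeFn_add (s - (1 / 2 : ℝ) • mulLinfty μ s (mulLinfty μ f (f - g))) ((σ / 2) • (f - g)),
    Lp.coeFn_sub s ((1 / 2 : ℝ) • mulLinfty μ s (mulLinfty μ f (f - g))),
    Lp.coeFn_smul (1 / 2 : ℝ) (mulLinfty μ s (mulLinfty μ f (f - g))),
    Lp.coeFn_smul (σ / 2) (f - g)] with ω h1 h2 h3 h4 h5 h6 h7 h8 h9 h10
  rw [h7, Pi.add_apply, h8, Pi.sub_apply, h9, h10, Pi.smul_apply, Pi.smul_apply, h4, h5, h6,
    Pi.sub_apply, smul_eq_mul, smul_eq_mul]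
  have hff : f ω * f ω = 1 := by rw [← abs_mul_abs_self, h1, one_mul]
  set a := f ω
  set b := g ω
  set t := s ω
  have hb : |a * b| ≤ 1 := by rw [abs_mul, h1, one_mul]; exact h2.trans hg
  obtain ⟨hb1, hb2⟩ := abs_le.1 hb
  have key : t - 1 / 2 * (t * (a * (a - b))) + σ / 2 * (a - b)
      = (1 - (1 - a * b) / 2) * t + ((1 - a * b) / 2) * (σ * a) := by
    linear_combination (-t / 2 + σ * b / 2) * hff
  rw [key]
  have hσa : |σ * a| = 1 := by rw [abs_mul, hσ, h1, one_mul]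
  have ht : |t| ≤ 1 := h3.trans hs
  calc _ ≤ |(1 - (1 - a * b) / 2) * t| + |((1 - a * b) / 2) * (σ * a)| := abs_add_le _ _
    _ = (1 - (1 - a * b) / 2) * |t| + ((1 - a * b) / 2) := by
        rw [abs_mul, abs_mul, hσa, mul_one,
          abs_of_nonneg (show 0 ≤ 1 - (1 - a * b) / 2 by linarith),
          abs_of_nonneg (show 0 ≤ (1 - a * b) / 2 by linarith)]
    _ ≤ (1 - (1 - a * b) / 2) * 1 + ((1 - a * b) / 2) := by
        gcongr
        linarith
    _ = 1 := by ring

/-- An almost norming element `s` of `φ` makes `k ↦ φ (s k)` an approximate majorant of `|φ|` on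
the functions `f - g`. -/
lemma abs_apply_sub_le {f g s : Lp ℝ ⊤ μ} (hf : ∀ᵐ ω ∂μ, |f ω| = 1) (hg : ‖g‖ ≤ 1)
    (hs : ‖s‖ ≤ 1) (φ : Lp ℝ ⊤ μ →L[ℝ] ℝ) {δ : ℝ} (hφ : ‖φ‖ - δ ≤ φ s) :
    |φ (f - g)| ≤ φ (mulLinfty μ s (mulLinfty μ f (f - g))) + 2 * δ := by
  have h1 := apply_le_norm φ (norm_comb_le hf hg hs (σ := 1) (by simp))
  have h2 := apply_le_norm φ (norm_comb_le hf hg hs (σ := -1) (by simp))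
  rw [map_add, map_sub, map_smul, map_smul, smul_eq_mul, smul_eq_mul] at h1 h2
  rw [abs_le]
  constructor <;> linarith

lemma exists_almost_norming (φ : Lp ℝ ⊤ μ →L[ℝ] ℝ) {δ : ℝ} (hδ : 0 < δ) :
    ∃ s : Lp ℝ ⊤ μ, ‖s‖ ≤ 1 ∧ ‖φ‖ - δ ≤ φ s := by
  by_contra! h
  have hle : ∀ s : Lp ℝ ⊤ μ, ‖s‖ ≤ 1 → |φ s| ≤ ‖φ‖ - δ := by
    intro s hs
    rw [abs_le]
    have h1 := h s hs
    have h2 := h (-s) (by rwa [norm_neg])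
    rw [map_neg] at h2
    constructor <;> linarith
  have h0 : 0 ≤ ‖φ‖ - δ := (abs_nonneg _).trans (hle 0 (by simp))
  have := φ.opNorm_le_of_unit_norm (C := ‖φ‖ - δ) h0 (fun x hx => hle x hx.le)
  linarith

lemma bddAbove_image_ball (φ : Lp ℝ ⊤ μ →L[ℝ] ℝ) :
    BddAbove ((fun y => φ y) '' closedBall (0 : Lp ℝ ⊤ μ) 1) := by
  refine ⟨‖φ‖, ?_⟩
  rintro _ ⟨y, hy, rfl⟩
  exact apply_le_norm φ (by simpa using hy)

lemma sliceOf_ball_nonempty (φ : Lp ℝ ⊤ μ →L[ℝ] ℝ) {α : ℝ} (hα : 0 < α) :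
    (sliceOf (closedBall (0 : Lp ℝ ⊤ μ) 1) φ α).Nonempty := by
  have hne : ((fun y => φ y) '' closedBall (0 : Lp ℝ ⊤ μ) 1).Nonempty :=
    ⟨_, 0, by simp, rfl⟩
  obtain ⟨_, ⟨y, hy, rfl⟩, hlt⟩ := exists_lt_of_lt_csSup hne (sub_lt_self _ hα)
  exact ⟨y, hy, hlt⟩

/-- Every weakly open set containing `x` contains a basic weak neighbourhood of `x`. -/
lemma exists_basic_nhd {X : Type*} [NormedAddCommGroup X] [NormedSpace ℝ X] {U : Set X}
    (hU : IsOpen[weakTop X] U) {x : X} (hx : x ∈ U) :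
    ∃ (I : Finset (X →L[ℝ] ℝ)) (ε : ℝ), 0 < ε ∧
      ∀ y, (∀ φ ∈ I, |φ (x - y)| < ε) → y ∈ U := by
  obtain ⟨V, hV, rfl⟩ := isOpen_induced_iff.1 hU
  obtain ⟨I, u, hu, hsub⟩ := isOpen_pi_iff.1 hV _ hx
  have hev : ∀ᶠ ε : ℝ in 𝓝[>] 0, ∀ φ ∈ I, ball (φ x) ε ⊆ u φ := by
    rw [Filter.eventually_all_finset]
    intro φ hφ
    obtain ⟨r, hr, hsubr⟩ := Metric.isOpen_iff.1 (hu φ hφ).1 _ (hu φ hφ).2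
    filter_upwards [Ioo_mem_nhdsGT hr] with ε hε
    exact (ball_subset_ball hε.2.le).trans hsubr
  obtain ⟨ε, hε, hε0⟩ := (hev.and self_mem_nhdsWithin).exists
  refine ⟨I, ε, hε0, fun y hy => hsub fun φ hφ => hε φ hφ ?_⟩
  have := hy φ hφ
  rwa [map_sub, abs_sub_comm] at this

lemma mem_ape_of_ae_abs_eq_one {f : Lp ℝ ⊤ μ} (hfB : f ∈ closedBall (0 : Lp ℝ ⊤ μ) 1)
    (hf : ∀ᵐ ω ∂μ, |f ω| = 1) : f ∈ ape (closedBall (0 : Lp ℝ ⊤ μ) 1) := by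
  refine ⟨hfB, fun U hU hfU => ?_⟩
  obtain ⟨I, ε, hε, hI⟩ := exists_basic_nhd hU hfU
  set δ : ℝ := ε / (4 * (I.card + 1)) with hδdef
  have hδ : 0 < δ := by positivity
  have hδI : I.card * (2 * δ) ≤ ε / 2 := by
    have : δ * (4 * (I.card + 1)) = ε := by rw [hδdef]; field_simp
    nlinarith
  choose s hs hsφ using fun φ : Lp ℝ ⊤ μ →L[ℝ] ℝ => exists_almost_norming φ hδ
  let ψ : Lp ℝ ⊤ μ →L[ℝ] ℝ := ∑ φ ∈ I, φ ∘L (mulLinfty μ (s φ)) ∘L (mulLinfty μ f)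
  have hψ : ∀ k, ψ k = ∑ φ ∈ I, φ (mulLinfty μ (s φ) (mulLinfty μ f k)) := by
    intro k
    simp [ψ]
  refine ⟨ψ, ε / 2, by positivity, sliceOf_ball_nonempty ψ (by positivity), ?_⟩
  rintro g ⟨hgB, hg⟩
  have hg1 : ‖g‖ ≤ 1 := by simpa using hgB
  have hsup : ψ f ≤ sSup ((fun y => ψ y) '' closedBall (0 : Lp ℝ ⊤ μ) 1) :=
    le_csSup (bddAbove_image_ball ψ) ⟨f, hfB, rfl⟩
  have hlt : ψ (f - g) < ε / 2 := by rw [map_sub]; linarith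
  rw [hψ] at hlt
  refine hI g fun φ hφ => ?_
  have hbound : ∀ φ : Lp ℝ ⊤ μ →L[ℝ] ℝ,
      |φ (f - g)| ≤ φ (mulLinfty μ (s φ) (mulLinfty μ f (f - g))) + 2 * δ :=
    fun φ => abs_apply_sub_le hf hg1 (hs φ) φ (hsφ φ)
  have hsingle := Finset.single_le_sum
    (f := fun φ => φ (mulLinfty μ (s φ) (mulLinfty μ f (f - g))) + 2 * δ)
    (fun φ _ => (abs_nonneg _).trans (hbound φ)) hφ
  rw [Finset.sum_add_distrib, Finset.sum_const, nsmul_eq_mul] at hsingle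
  have := hbound φ
  linarith

/-! ### Almost preserved extreme points are unimodular -/

/-- The limit along an ultrafilter finer than the a.e. filter is a continuous functional on
`L∞(μ)`. -/
lemma exists_ultrafilter_limit (F : Ultrafilter Ω) (hF : (F : Filter Ω) ≤ ae μ) :
    ∃ χ : Lp ℝ ⊤ μ →L[ℝ] ℝ, ∀ g : Lp ℝ ⊤ μ, Tendsto g F (𝓝 (χ g)) := by
  have hex : ∀ g : Lp ℝ ⊤ μ, ∃ c, |c| ≤ ‖g‖ ∧ Tendsto g F (𝓝 c) := by
    intro g
    have hmem : g ⁻¹' Icc (-‖g‖) ‖g‖ ∈ (F : Filter Ω) :=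
      mem_of_superset (hF (ae_abs_le_norm g)) fun ω hω => abs_le.1 hω
    obtain ⟨c, hc, hle⟩ := isCompact_Icc.ultrafilter_le_nhds (F.map g) (le_principal_iff.2 hmem)
    exact ⟨c, abs_le.2 hc, hle⟩
  choose c hc ht using hex
  let L : Lp ℝ ⊤ μ →ₗ[ℝ] ℝ :=
    { toFun := c
      map_add' := fun g h => tendsto_nhds_unique
        ((ht (g + h)).congr' (hF (Lp.coeFn_add g h))) ((ht g).add (ht h))
      map_smul' := fun a g => tendsto_nhds_unique
        ((ht (a • g)).congr' (hF (Lp.coeFn_smul a g))) ((ht g).const_smul a) }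
  exact ⟨L.mkContinuous 1 (fun g => by rw [one_mul]; exact hc g), ht⟩

/-- Replacing an element of the unit ball by the constant `σ`, `|σ| ≤ 1`, on a measurable set. -/
lemma exists_replace {x : Lp ℝ ⊤ μ} (hx : ‖x‖ ≤ 1) {A : Set Ω} (hA : MeasurableSet A) {σ : ℝ}
    (hσ : |σ| ≤ 1) :
    ∃ g : Lp ℝ ⊤ μ, ‖g‖ ≤ 1 ∧ ∀ᵐ ω ∂μ, (ω ∈ A → g ω = σ) ∧ (ω ∉ A → g ω = x ω) := by
  classical
  have hbd : ∀ᵐ ω ∂μ, ‖A.piecewise (fun _ => σ) x ω‖ ≤ 1 := by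
    filter_upwards [ae_abs_le_norm x] with ω hω
    by_cases h : ω ∈ A
    · simpa [h] using hσ
    · simpa [h] using hω.trans hx
  have hmem : MemLp (A.piecewise (fun _ => σ) x) ⊤ μ :=
    memLp_top_of_bound
      (StronglyMeasurable.piecewise hA stronglyMeasurable_const
        (Lp.stronglyMeasurable x)).aestronglyMeasurable 1 hbd
  refine ⟨hmem.toLp _, norm_le_of_ae_abs_le _ zero_le_one ?_, ?_⟩
  · filter_upwards [hmem.coeFn_toLp, hbd] with ω h1 h2
    rw [h1]
    exact h2
  · filter_upwards [hmem.coeFn_toLp] with ω h1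
    rw [h1]
    exact ⟨fun h => by simp [h], fun h => by simp [h]⟩

lemma exists_frequently_abs_le {f : Lp ℝ ⊤ μ} (hfB : ‖f‖ ≤ 1) (hf : ¬ ∀ᵐ ω ∂μ, |f ω| = 1) :
    ∃ r < 1, ∃ᶠ ω in ae μ, |f ω| ≤ r := by
  by_contra! h
  apply hf
  have hall : ∀ᵐ ω ∂μ, ∀ n : ℕ, 1 - 1 / ((n : ℝ) + 1) < |f ω| := by
    rw [ae_all_iff]
    intro n
    have := h (1 - 1 / ((n : ℝ) + 1)) (sub_lt_self _ (by positivity))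
    simpa [Filter.not_frequently] using this
  filter_upwards [hall, ae_abs_le_norm f] with ω h1 h2
  refine le_antisymm (h2.trans hfB) ?_
  by_contra! hlt
  obtain ⟨n, hn⟩ := exists_nat_one_div_lt (sub_pos.2 hlt)
  linarith [h1 n]

/-- No nonempty slice of the unit ball is contained in `{g | |χ g| < 1}` for `χ` an ultrafilter
limit. -/
lemma exists_mem_slice_abs_eq_one (F : Ultrafilter Ω) (hF : (F : Filter Ω) ≤ ae μ)
    {χ : Lp ℝ ⊤ μ →L[ℝ] ℝ} (hχ : ∀ g : Lp ℝ ⊤ μ, Tendsto g F (𝓝 (χ g)))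
    (ψ : Lp ℝ ⊤ μ →L[ℝ] ℝ) {α : ℝ} {x : Lp ℝ ⊤ μ}
    (hx : x ∈ sliceOf (closedBall (0 : Lp ℝ ⊤ μ) 1) ψ α) :
    ∃ g ∈ sliceOf (closedBall (0 : Lp ℝ ⊤ μ) 1) ψ α, |χ g| = 1 := by
  obtain ⟨hxB, hxψ⟩ := hx
  have hx1 : ‖x‖ ≤ 1 := by simpa using hxB
  set M := sSup ((fun y => ψ y) '' closedBall (0 : Lp ℝ ⊤ μ) 1) - α with hM
  set c := χ x with hc
  have hc1 : |c| ≤ 1 := by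
    refine le_of_tendsto (hχ x).abs ?_
    filter_upwards [hF (ae_abs_le_norm x)] with ω hω
    exact hω.trans hx1
  set ε : ℝ := (ψ x - M) / (‖ψ‖ + 1) with hεdef
  have hε : 0 < ε := div_pos (sub_pos.2 hxψ) (by positivity)
  have hψε : ‖ψ‖ * ε < ψ x - M := by
    have : ε * (‖ψ‖ + 1) = ψ x - M := by rw [hεdef]; field_simp
    linarith
  set A : Set Ω := x ⁻¹' ball c ε with hA
  have hAm : MeasurableSet A := (Lp.stronglyMeasurable x).measurable measurableSet_ball
  have hAF : ∀ᶠ ω in F, ω ∈ A := hχ x (ball_mem_nhds c hε)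
  obtain ⟨p, hp1, hp⟩ := exists_replace hx1 hAm (σ := 1) (by simp)
  obtain ⟨m, hm1, hm⟩ := exists_replace hx1 hAm (σ := -1) (by simp)
  have hval : ∀ (g : Lp ℝ ⊤ μ) (σ : ℝ),
      (∀ᵐ ω ∂μ, (ω ∈ A → g ω = σ) ∧ (ω ∉ A → g ω = x ω)) → χ g = σ := by
    intro g σ hg
    refine tendsto_nhds_unique (hχ g) (tendsto_const_nhds.congr' ?_)
    filter_upwards [hF hg, hAF] with ω h1 h2
    exact (h1.1 h2).symm
  -- The weights are those for which the combination equals the constant `c` on `A`.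
  have hclose : ‖x - (((1 + c) / 2) • p + ((1 - c) / 2) • m)‖ ≤ ε := by
    refine norm_le_of_ae_abs_le _ hε.le ?_
    filter_upwards [hp, hm, Lp.coeFn_sub x (((1 + c) / 2) • p + ((1 - c) / 2) • m),
      Lp.coeFn_add (((1 + c) / 2) • p) (((1 - c) / 2) • m), Lp.coeFn_smul ((1 + c) / 2) p,
      Lp.coeFn_smul ((1 - c) / 2) m] with ω h1 h2 h3 h4 h5 h6
    rw [h3, Pi.sub_apply, h4, Pi.add_apply, h5, h6, Pi.smul_apply, Pi.smul_apply, smul_eq_mul,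
      smul_eq_mul]
    by_cases h : ω ∈ A
    · rw [h1.1 h, h2.1 h]
      have hd : |x ω - c| < ε := h
      rw [show x ω - ((1 + c) / 2 * 1 + (1 - c) / 2 * -1) = x ω - c by ring]
      exact hd.le
    · rw [h1.2 h, h2.2 h]
      rw [show x ω - ((1 + c) / 2 * x ω + (1 - c) / 2 * x ω) = 0 by ring, abs_zero]
      exact hε.le
  have hψle : ψ x - ((1 + c) / 2 * ψ p + (1 - c) / 2 * ψ m) ≤ ‖ψ‖ * ε := by
    have h1 := (le_abs_self _).trans (ψ.le_opNorm (x - (((1 + c) / 2) • p + ((1 - c) / 2) • m)))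
    have h2 := mul_le_mul_of_nonneg_left hclose (norm_nonneg ψ)
    rw [map_sub, map_add, map_smul, map_smul, smul_eq_mul, smul_eq_mul] at h1
    exact h1.trans h2
  obtain ⟨hc2, hc3⟩ := abs_le.1 hc1
  by_cases hpM : M < ψ p
  · exact ⟨p, ⟨by simpa using hp1, hpM⟩, by rw [hval p 1 hp, abs_one]⟩
  by_cases hmM : M < ψ m
  · exact ⟨m, ⟨by simpa using hm1, hmM⟩, by rw [hval m (-1) hm, abs_neg, abs_one]⟩
  exfalso
  push Not at hpM hmM
  have h1 := mul_le_mul_of_nonneg_left hpM (show 0 ≤ (1 + c) / 2 by linarith)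
  have h2 := mul_le_mul_of_nonneg_left hmM (show 0 ≤ (1 - c) / 2 by linarith)
  linarith

lemma ae_abs_eq_one_of_mem_ape {f : Lp ℝ ⊤ μ} (hf : f ∈ ape (closedBall (0 : Lp ℝ ⊤ μ) 1)) :
    ∀ᵐ ω ∂μ, |f ω| = 1 := by
  by_contra hne
  obtain ⟨hfB, hape⟩ := hf
  obtain ⟨r, hr, hfreq⟩ := exists_frequently_abs_le (by simpa using hfB) hne
  have hbot : (ae μ ⊓ 𝓟 {ω | |f ω| ≤ r}).NeBot := Filter.frequently_mem_iff_neBot.1 hfreq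
  set F := Ultrafilter.of (ae μ ⊓ 𝓟 {ω | |f ω| ≤ r})
  have hF : (F : Filter Ω) ≤ ae μ ⊓ 𝓟 {ω | |f ω| ≤ r} := Ultrafilter.of_le _
  obtain ⟨χ, hχ⟩ := exists_ultrafilter_limit F (hF.trans inf_le_left)
  have hχf : |χ f| < 1 :=
    (le_of_tendsto (hχ f).abs (hF.trans inf_le_right (mem_principal_self _))).trans_lt hr
  have hopen : IsOpen[weakTop (Lp ℝ ⊤ μ)] {g : Lp ℝ ⊤ μ | |χ g| < 1} := by
    refine isOpen_induced_iff.2 ⟨{v | |v χ| < 1}, ?_, rfl⟩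
    exact isOpen_lt (continuous_apply χ).abs continuous_const
  obtain ⟨ψ, α, -, ⟨x, hx⟩, hsub⟩ := hape _ hopen hχf
  obtain ⟨g, hg, hg1⟩ := exists_mem_slice_abs_eq_one F (hF.trans inf_le_left) hχ ψ hx
  have hlt : |χ g| < 1 := hsub hg
  exact hlt.ne hg1

end ApeLinfty

/-- For a σ-finite measure `μ`, an element `f` of the closed unit ball of
`L∞(μ)` is an almost preserved extreme point of the ball if and only if `|f ω| = 1` for
μ-almost every `ω`. -/
theorem ape_closedBall_Linfty_iff {Ω : Type*} [MeasurableSpace Ω] (μ : Measure Ω)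
    [SigmaFinite μ] (f : Lp ℝ ⊤ μ) (hf : f ∈ Metric.closedBall (0 : Lp ℝ ⊤ μ) 1) :
    f ∈ ape (Metric.closedBall (0 : Lp ℝ ⊤ μ) 1) ↔ ∀ᵐ ω ∂μ, |f ω| = 1 := by
  exact ⟨ApeLinfty.ae_abs_eq_one_of_mem_ape, ApeLinfty.mem_ape_of_ae_abs_eq_one hf⟩
end
end

section
/- Let I be a nonempty set and let ℓ∞(I) be the real Banach space of bounded functions x = (x_i)_{i∈I} from I to ℝ with the supremum norm. Then x in the closed unit ball B_{ℓ∞(I)} is an almost preserved extreme point of B_{ℓ∞(I)} if and only if |x_i| = 1 for every i ∈ I. -/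
/-!
Necessity: if `f` is a functional and `y` lies in a slice of the ball determined by `f`, then replacing
the coordinate `y i` by `±1`, with the sign of `f (e i)`, does not decrease `f`, so every slice contains
points with `|y i| = 1`. Hence no slice fits into the weakly open set `{y | |y i| < 1}`.

Sufficiency: let `|x i| = 1` for all `i`, and let `g` be a functional. Choose `w` in the ball almost
norming `g` and put `f y = g (w * x * y)`, an approximation of the total variation of `g` twisted by `x`.
For `y` in the ball, the coordinates of `w * (1 + x * y) / 2 ± (x - y) / 2` are bounded by
`(1 + x i * y i) / 2 + (1 - x i * y i) / 2 = 1`, so evaluating `g` there gives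
`|g (x - y)| ≤ 2 ‖g‖ - g w - f y`, which is small as soon as `f y` is close to `‖g‖`
(`abs_apply_sub_le`). Summing the functionals `f` obtained from finitely many `g` yields a functional
whose slices lie in a given weak neighbourhood of `x`.
-/

open Set Metric Topology Bornology

noncomputable section

section Helpers

variable {I : Type*}

lemma lpInfty_norm_le_one_iff (y : lp (fun _ : I => ℝ) ⊤) : ‖y‖ ≤ 1 ↔ ∀ i, |y i| ≤ 1 := by
  constructor
  · intro h i
    exact (lp.norm_apply_le_norm ENNReal.top_ne_zero y i).trans h
  · intro h
    exact lp.norm_le_of_forall_le zero_le_one h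

lemma isOpen_weakTop_preimage {X : Type*} [NormedAddCommGroup X] [NormedSpace ℝ X]
    (φ : X →L[ℝ] ℝ) {V : Set ℝ} (hV : IsOpen V) : IsOpen[weakTop X] (φ ⁻¹' V) := by
  refine isOpen_induced_iff.2 ⟨(fun F : (X →L[ℝ] ℝ) → ℝ => F φ) ⁻¹' V, ?_, rfl⟩
  exact hV.preimage (continuous_apply φ)

/-- A weak neighbourhood contains one given by finitely many functionals and a common radius. -/
lemma exists_finset_of_weakTop {X : Type*} [NormedAddCommGroup X] [NormedSpace ℝ X]
    {U : Set X} (hU : IsOpen[weakTop X] U) {x : X} (hx : x ∈ U) :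
    ∃ (F : Finset (X →L[ℝ] ℝ)) (ε : ℝ), 0 < ε ∧ ∀ y, (∀ g ∈ F, |g (x - y)| < ε) → y ∈ U := by
  obtain ⟨V, hV, rfl⟩ := isOpen_induced_iff.1 hU
  obtain ⟨F, u, hu, hF⟩ := isOpen_pi_iff.1 hV _ hx
  have h1 : ∀ g ∈ F, ∀ᶠ ε in 𝓝[>] (0 : ℝ), Metric.ball (g x) ε ⊆ u g := by
    intro g hg
    obtain ⟨r, hr, hb⟩ := Metric.isOpen_iff.1 (hu g hg).1 _ (hu g hg).2
    filter_upwards [Ioo_mem_nhdsGT hr] with ε hε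
    exact (Metric.ball_subset_ball hε.2.le).trans hb
  have h2 := ((Filter.eventually_all_finset F).2 h1).and self_mem_nhdsWithin
  obtain ⟨ε, hε, hpos⟩ := h2.exists
  refine ⟨F, ε, hpos, fun y hy => hF fun g hg => hε g hg ?_⟩
  have := hy g hg
  rwa [map_sub, ← Real.dist_eq, dist_comm] at this

lemma apply_le_norm_of_mem_ball {X : Type*} [NormedAddCommGroup X] [NormedSpace ℝ X]
    (g : X →L[ℝ] ℝ) {y : X} (hy : ‖y‖ ≤ 1) : g y ≤ ‖g‖ := by
  have := g.le_opNorm y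
  rw [Real.norm_eq_abs] at this
  nlinarith [le_abs_self (g y), norm_nonneg g]

lemma exists_almost_norming_s8 {X : Type*} [NormedAddCommGroup X] [NormedSpace ℝ X]
    (g : X →L[ℝ] ℝ) {δ : ℝ} (hδ : 0 < δ) : ∃ w : X, ‖w‖ ≤ 1 ∧ ‖g‖ - δ < g w := by
  by_contra! h
  have h0 : 0 ≤ ‖g‖ - δ := by simpa using h 0 (by simp)
  have : ‖g‖ ≤ ‖g‖ - δ := by
    refine g.opNorm_le_of_unit_norm h0 fun z hz => ?_
    rw [Real.norm_eq_abs]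
    refine abs_le'.2 ⟨h z hz.le, ?_⟩
    simpa using h (-z) (by simp [hz])
  linarith

/-- The key estimate: if `w` almost norms `g` and `g (w * x * y)` is close to `‖g‖`, then `g` nearly
takes the same value at `x` and `y`. -/
lemma abs_apply_sub_le (g : lp (fun _ : I => ℝ) ⊤ →L[ℝ] ℝ) {x w y : lp (fun _ : I => ℝ) ⊤}
    (hx : ∀ i, |x i| = 1) (hw : ‖w‖ ≤ 1) (hy : ‖y‖ ≤ 1) :
    |g (x - y)| ≤ 2 * ‖g‖ - g w - g (w * x * y) := by
  have key : ∀ s : ℝ, |s| = 1 →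
      ‖(2⁻¹ : ℝ) • (w + w * x * y) + (s * 2⁻¹) • (x - y)‖ ≤ 1 := by
    intro s hs
    rw [lpInfty_norm_le_one_iff] at hw hy ⊢
    intro i
    have e : ((2⁻¹ : ℝ) • (w + w * x * y) + (s * 2⁻¹) • (x - y)) i
        = 2⁻¹ * (w i + w i * x i * y i) + (s * 2⁻¹) * (x i - y i) := by
      rfl
    rw [e]
    have hwi := abs_le.1 (hw i)
    have hyi := abs_le.1 (hy i)
    rw [abs_le]
    rcases eq_or_eq_neg_of_abs_eq (hx i) with h | h <;>
      rcases eq_or_eq_neg_of_abs_eq hs with h' | h' <;> rw [h, h'] <;>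
      constructor <;> nlinarith
  have h1 := apply_le_norm_of_mem_ball g (key 1 (by simp))
  have h2 := apply_le_norm_of_mem_ball g (key (-1) (by simp))
  simp only [map_add, map_smul, smul_eq_mul] at h1 h2
  rw [abs_le]
  constructor <;> linarith

lemma exists_extremal_coord_ge {i : I} (f : lp (fun _ : I => ℝ) ⊤ →L[ℝ] ℝ) {y : lp (fun _ : I => ℝ) ⊤}
    (hy : ‖y‖ ≤ 1) : ∃ z : lp (fun _ : I => ℝ) ⊤, ‖z‖ ≤ 1 ∧ |z i| = 1 ∧ f y ≤ f z := by
  classical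
  have aux : ∀ s : ℝ, |s| = 1 → 0 ≤ (s - y i) * f (lp.single ⊤ i (1 : ℝ)) →
      ∃ z : lp (fun _ : I => ℝ) ⊤, ‖z‖ ≤ 1 ∧ |z i| = 1 ∧ f y ≤ f z := by
    intro s hs hf
    have hi : (y + (s - y i) • lp.single ⊤ i (1 : ℝ) : lp (fun _ : I => ℝ) ⊤) i = s := by
      change y i + (s - y i) * (lp.single ⊤ i (1 : ℝ) : lp (fun _ : I => ℝ) ⊤) i = s
      simp
    refine ⟨y + (s - y i) • lp.single ⊤ i (1 : ℝ), ?_, by rw [hi, hs], ?_⟩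
    · rw [lpInfty_norm_le_one_iff] at hy ⊢
      intro j
      by_cases h : j = i
      · subst h
        rw [hi, hs]
      · change |y j + (s - y i) * (lp.single ⊤ i (1 : ℝ) : lp (fun _ : I => ℝ) ⊤) j| ≤ 1
        simpa [Pi.single_apply, h] using hy j
    · simp only [map_add, map_smul, smul_eq_mul]
      linarith
  have hyi := abs_le.1 ((lpInfty_norm_le_one_iff y).1 hy i)
  rcases le_total 0 (f (lp.single ⊤ i (1 : ℝ))) with h | h
  · exact aux 1 (by simp) (mul_nonneg (by linarith) h)
  · exact aux (-1) (by simp) (mul_nonneg_of_nonpos_of_nonpos (by linarith) h)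

end Helpers

/-- An element `x` of the closed unit ball of `ℓ∞(I)` (for `I` nonempty) is an
almost preserved extreme point of the ball if and only if `|x i| = 1` for every `i ∈ I`. -/
theorem ape_closedBall_lpInfty_iff {I : Type*} [Nonempty I]
    (x : lp (fun _ : I => ℝ) ⊤) (hx : x ∈ Metric.closedBall (0 : lp (fun _ : I => ℝ) ⊤) 1) :
    x ∈ ape (Metric.closedBall (0 : lp (fun _ : I => ℝ) ⊤) 1) ↔ ∀ i : I, |x i| = 1 := by
  have hx1 : ‖x‖ ≤ 1 := mem_closedBall_zero_iff.1 hx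
  constructor
  · rintro ⟨-, h⟩ i
    by_contra hne
    have hlt : |x i| < 1 := lt_of_le_of_ne ((lpInfty_norm_le_one_iff x).1 hx1 i) hne
    let φ : lp (fun _ : I => ℝ) ⊤ →L[ℝ] ℝ := LinearMap.mkContinuous
      { toFun := fun y => y i
        map_add' := fun _ _ => rfl
        map_smul' := fun _ _ => rfl } 1
      (fun y => by
        rw [one_mul]
        exact lp.norm_apply_le_norm ENNReal.top_ne_zero y i)
    obtain ⟨f, α, -, ⟨y, hy, hfy⟩, hsub⟩ := h (φ ⁻¹' {t | |t| < 1})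
      (isOpen_weakTop_preimage φ (isOpen_lt continuous_abs continuous_const)) hlt
    obtain ⟨z, hz, hzi, hfz⟩ := exists_extremal_coord_ge (i := i) f (mem_closedBall_zero_iff.1 hy)
    have hmem := hsub ⟨mem_closedBall_zero_iff.2 hz, hfy.trans_le hfz⟩
    have : |z i| < 1 := hmem
    linarith
  · intro hxi
    refine ⟨hx, fun U hU hxU => ?_⟩
    obtain ⟨F, ε, hε, hF⟩ := exists_finset_of_weakTop hU hxU
    -- The errors add up to at most `δ + (card F * δ + ε / 2) < ε`.
    obtain ⟨δ, hδ, hδε⟩ : ∃ δ : ℝ, 0 < δ ∧ (F.card + 1) * δ < ε / 2 := by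
      have hc : (0 : ℝ) < F.card + 1 := by positivity
      refine ⟨ε / 4 / (F.card + 1), by positivity, ?_⟩
      rw [mul_div_cancel₀ _ hc.ne']
      linarith
    choose w hw hgw using fun g : lp (fun _ : I => ℝ) ⊤ →L[ℝ] ℝ => exists_almost_norming_s8 g hδ
    let f : lp (fun _ : I => ℝ) ⊤ →L[ℝ] ℝ :=
      ∑ g ∈ F, g.comp (ContinuousLinearMap.mul ℝ (lp (fun _ : I => ℝ) ⊤) (w g * x))
    have hf : ∀ y, f y = ∑ g ∈ F, g (w g * x * y) := by
      intro y
      simp [f]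
    have hxx : ∀ v : lp (fun _ : I => ℝ) ⊤, v * x * x = v := by
      intro v
      ext i
      have : x i * x i = 1 := by rw [← abs_mul_abs_self, hxi i, one_mul]
      simp [lp.infty_coeFn_mul, mul_assoc, this]
    have hbdd : BddAbove ((fun y => f y) '' closedBall (0 : lp (fun _ : I => ℝ) ⊤) 1) := by
      refine ⟨‖f‖, ?_⟩
      rintro _ ⟨y, hy, rfl⟩
      exact apply_le_norm_of_mem_ball f (mem_closedBall_zero_iff.1 hy)
    refine ⟨f, ε / 2, by positivity, ?_, ?_⟩
    · obtain ⟨_, ⟨y, hy, rfl⟩, h⟩ := exists_lt_of_lt_csSup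
        (s := (fun y => f y) '' closedBall (0 : lp (fun _ : I => ℝ) ⊤) 1) ⟨_, x, hx, rfl⟩
        (sub_lt_self _ (half_pos hε))
      exact ⟨y, hy, h⟩
    · rintro y ⟨hy, hfy⟩
      have hy1 : ‖y‖ ≤ 1 := mem_closedBall_zero_iff.1 hy
      refine hF y fun g hg => ?_
      have hsup : f x ≤ sSup ((fun y => f y) '' closedBall (0 : lp (fun _ : I => ℝ) ⊤) 1) :=
        le_csSup hbdd ⟨x, hx, rfl⟩
      have hfx : ∑ g ∈ F, (‖g‖ - δ) ≤ f x := by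
        rw [hf]
        refine Finset.sum_le_sum fun g _ => ?_
        rw [hxx]
        exact (hgw g).le
      have hle : ∀ g ∈ F, 0 ≤ ‖g‖ - g (w g * x * y) := by
        intro g _
        refine sub_nonneg.2 (apply_le_norm_of_mem_ball g ?_)
        calc ‖w g * x * y‖ ≤ ‖w g‖ * ‖x‖ * ‖y‖ :=
              (norm_mul_le _ _).trans (by gcongr; exact norm_mul_le _ _)
          _ ≤ 1 := mul_le_one₀ (mul_le_one₀ (hw g) (norm_nonneg _) hx1) (norm_nonneg _) hy1
      have hone := Finset.single_le_sum hle hg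
      rw [Finset.sum_sub_distrib, ← hf] at hone
      rw [Finset.sum_sub_distrib, Finset.sum_const, nsmul_eq_mul] at hfx
      have hest := abs_apply_sub_le g hxi (hw g) hy1
      have := hgw g
      linarith
end
end

section
/- Let 1 < p < ∞, let {X_i : i ∈ I} be a family of real Banach spaces and let X = (⊕_{i∈I} X_i)_{ℓ_p} be their ℓ_p-sum, consisting of all families x = (x_i) with x_i ∈ X_i and ‖x‖ = (Σ_{i∈I} ‖x_i‖^p)^{1/p} < ∞. For (x_i) on the unit sphere S_X the following are equivalent: (1) (x_i) is an almost preserved extreme point of B_X; (2) for every i ∈ I, either x_i = 0 or x_i/‖x_i‖ is an almost preserved extreme point of B_{X_i}. -/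
/-!
The argument rests on near-equality in Young's inequality. For coefficients `a i ≥ 0` with
`∑ i ∈ F, a i ^ p ≤ 1` and functionals `f i` of norm at most one, put
`φ y = ∑ i ∈ F, a i ^ (p - 1) * f i (y i)`. For `‖y‖ ≤ 1` the quantity `1 - φ y` dominates a sum of
nonnegative terms (`sum_youngGap_le`): the Young defects of the pairs `(a i, ‖y i‖)`, the losses
`a i ^ (p - 1) * (‖y i‖ - f i (y i))`, and a multiple of the `p`-th power of the norm of the part
of `y` outside `F`. Since the Young defect of `(a, b)` vanishes only at `b = a`, a slice of `φ` close
to level one forces `‖y i‖ ≈ a i` for each `i ∈ F` with `a i > 0`.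

From coordinates to the sum: for finitely supported `x`, take `a i = ‖x i‖` and let `f i` define a
slice of the ball of `X i` inside a weak neighbourhood of `x i / ‖x i‖`; then a thin slice of `φ`
lies in a given weak neighbourhood of `x` (`sum_single_mem_ape`). The general case follows because
normalised finite truncations of `x` converge to `x` (`mem_ape_of_forall_coord`).

From the sum to a coordinate `i`: take `a j = ‖x j‖` and let `f j` be a norming functional of `x j`.
The set where `φ` is close to one is a weak neighbourhood of `x` on which `‖y i‖ ≈ ‖x i‖`. Choose a
slice of the ball of the sum inside it, fix a point `y₀` of that slice and replace its `i`-th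
coordinate by `‖y₀ i‖ • v` with `v` in the ball of `X i`. The vectors `v` for which the result stays
in the slice form a slice of the ball of `X i`, contained in the prescribed weak neighbourhood of
`x i / ‖x i‖` (`coord_mem_ape`).
-/

open Set Metric Topology Bornology
open scoped ENNReal

noncomputable section

/-! ### Slices of the unit ball -/

/-- A point of the closed unit ball is an almost preserved extreme point iff every basic weak
neighbourhood contains a nonempty set `{y ∈ B : c < f y}`. Writing slices with an absolute
threshold `c` avoids computing suprema. -/
lemma mem_ape_ball_iff {E : Type*} [NormedAddCommGroup E] [NormedSpace ℝ E] (x : E) :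
    x ∈ ape (closedBall (0 : E) 1) ↔ ‖x‖ ≤ 1 ∧
      ∀ (G : Finset (E →L[ℝ] ℝ)) (ε : ℝ), 0 < ε → ∃ (f : E →L[ℝ] ℝ) (c : ℝ),
        (∃ y, ‖y‖ ≤ 1 ∧ c < f y) ∧
        ∀ y, ‖y‖ ≤ 1 → c < f y → ∀ g ∈ G, |g y - g x| < ε := by
  unfold ape sliceOf
  simp only [mem_ofPred_eq, mem_closedBall_zero_iff]
  refine and_congr_right fun hx => ⟨fun h G ε hε => ?_, fun h U hU hxU => ?_⟩
  · obtain ⟨f, α, hα, ⟨y, hy, hyf⟩, hsub⟩ := h {y | ∀ g ∈ G, |g y - g x| < ε} (by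
      refine ⟨{φ | ∀ g ∈ G, |φ g - g x| < ε}, ?_, rfl⟩
      have : {φ : (E →L[ℝ] ℝ) → ℝ | ∀ g ∈ G, |φ g - g x| < ε} =
          ⋂ g ∈ G, {φ | |φ g - g x| < ε} := by ext; simp
      rw [this]
      refine isOpen_biInter_finset fun g _ => ?_
      exact isOpen_lt (by fun_prop) continuous_const) (by simp [hε])
    refine ⟨f, _, ⟨y, by simpa using hy, hyf⟩, fun z hz hzf g hg => ?_⟩
    exact hsub ⟨by simpa using hz, hzf⟩ g hg
  · obtain ⟨V, hV, rfl⟩ := hU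
    obtain ⟨G, u, hu, hsub⟩ := isOpen_pi_iff.1 hV _ hxU
    have hev : ∀ᶠ ε in 𝓝[>] (0 : ℝ), ∀ g ∈ G, ball (g x) ε ⊆ u g := by
      rw [Filter.eventually_all_finset]
      intro g hg
      obtain ⟨r, hr, hru⟩ := Metric.isOpen_iff.1 (hu g hg).1 _ (hu g hg).2
      filter_upwards [Ioo_mem_nhdsGT hr] with ε hε
      exact (ball_subset_ball hε.2.le).trans hru
    obtain ⟨ε, hε, hε0⟩ := (hev.and self_mem_nhdsWithin).exists
    obtain ⟨f, c, ⟨y, hy, hyf⟩, hf⟩ := h G ε hε0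
    have hbdd : BddAbove ((fun y => f y) '' closedBall (0 : E) 1) := by
      refine ⟨‖f‖, ?_⟩
      rintro _ ⟨z, hz, rfl⟩
      have hz' : ‖z‖ ≤ 1 := by simpa using hz
      calc f z ≤ ‖f z‖ := le_abs_self _
        _ ≤ ‖f‖ := f.unit_le_opNorm z hz'
    have hc : c < sSup ((fun y => f y) '' closedBall (0 : E) 1) :=
      hyf.trans_le (le_csSup hbdd ⟨y, by simpa using hy, rfl⟩)
    refine ⟨f, _, sub_pos.2 hc, ⟨y, by simpa using hy, by simpa using hyf⟩, ?_⟩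
    rintro z ⟨hz, hzf⟩
    refine hsub fun g hg => hε g hg ?_
    rw [mem_ball, Real.dist_eq]
    exact hf z (by simpa using hz) (by simpa using hzf) g hg

/-! ### Near-equality in Young's inequality -/

/-- The defect in Young's inequality `a ^ (p - 1) * b ≤ (1 - 1 / p) * a ^ p + b ^ p / p`. -/
def youngGap (p a b : ℝ) : ℝ := (1 - 1 / p) * a ^ p + b ^ p / p - a ^ (p - 1) * b

lemma youngGap_pos {p a b : ℝ} (hp : 1 < p) (ha : 0 < a) (hb : 0 ≤ b) (hab : b ≠ a) :
    0 < youngGap p a b := by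
  have hp0 : 0 < p := by linarith
  have h := one_add_mul_self_lt_rpow_one_add (s := b / a - 1)
    (by linarith [div_nonneg hb ha.le])
    (by rw [sub_ne_zero, Ne, div_eq_one_iff_eq ha.ne']; exact hab) hp
  have hap : 0 < a ^ p := Real.rpow_pos_of_pos ha p
  rw [add_sub_cancel, Real.div_rpow hb ha.le, lt_div_iff₀ hap] at h
  have h2 : a ^ p = a ^ (p - 1) * a := by
    rw [← Real.rpow_add_one ha.ne', sub_add_cancel]
  have h3 : (1 + p * (b / a - 1)) * a ^ p = (1 - p) * a ^ p + p * (a ^ (p - 1) * b) := by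
    rw [h2]; field_simp; ring
  have h4 : youngGap p a b = (b ^ p - ((1 - p) * a ^ p + p * (a ^ (p - 1) * b))) / p := by
    unfold youngGap; field_simp; ring
  rw [h4]
  exact div_pos (by linarith) hp0

lemma youngGap_nonneg {p a b : ℝ} (hp : 1 < p) (ha : 0 ≤ a) (hb : 0 ≤ b) :
    0 ≤ youngGap p a b := by
  have hp0 : 0 < p := by linarith
  rcases ha.eq_or_lt with rfl | ha
  · have : 0 ≤ b ^ p / p := by positivity
    simpa [youngGap, Real.zero_rpow hp0.ne', Real.zero_rpow (sub_pos.2 hp).ne'] using this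
  · by_cases hab : b = a
    · subst hab
      have h2 : b ^ p = b ^ (p - 1) * b := by
        rw [← Real.rpow_add_one ha.ne', sub_add_cancel]
      unfold youngGap
      rw [← h2]
      apply le_of_eq
      ring
    · exact (youngGap_pos hp ha hb hab).le

/-- By compactness of `[0, 1]`, near-equality in Young's inequality forces `b` close to `a`. -/
lemma exists_youngGap_stable {p a η : ℝ} (hp : 1 < p) (ha : 0 < a) (hη : 0 < η) :
    ∃ δ > 0, ∀ b, 0 ≤ b → b ≤ 1 → youngGap p a b ≤ δ → |b - a| < η := by
  have hp0 : 0 < p := by linarith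
  have hcont : Continuous (youngGap p a) := by
    unfold youngGap
    have : Continuous fun b : ℝ => b ^ p := Real.continuous_rpow_const hp0.le
    fun_prop
  have hK : IsCompact (Icc (0 : ℝ) 1 ∩ {b | η ≤ |b - a|}) :=
    isCompact_Icc.inter_right (isClosed_le continuous_const (by fun_prop))
  rcases (Icc (0 : ℝ) 1 ∩ {b | η ≤ |b - a|}).eq_empty_or_nonempty with he | hne
  · refine ⟨1, one_pos, fun b h0 h1 _ => ?_⟩
    by_contra hb
    have : b ∈ Icc (0 : ℝ) 1 ∩ {b | η ≤ |b - a|} := ⟨⟨h0, h1⟩, not_lt.1 hb⟩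
    simp [he] at this
  · obtain ⟨b₀, ⟨hb₀, hb₀η⟩, hmin⟩ := hK.exists_isMinOn hne hcont.continuousOn
    have hpos : 0 < youngGap p a b₀ := by
      refine youngGap_pos hp ha hb₀.1 ?_
      rintro rfl
      simp only [mem_ofPred_eq, sub_self, abs_zero] at hb₀η
      linarith
    refine ⟨youngGap p a b₀ / 2, by positivity, fun b h0 h1 hb => ?_⟩
    by_contra hb'
    have h : youngGap p a b₀ ≤ youngGap p a b := hmin ⟨⟨h0, h1⟩, not_lt.1 hb'⟩
    linarith

/-- The `ℓ_p` form of the defect: if `φ = ∑ i ∈ F, a i ^ (p - 1) • f i` with `‖a‖_p ≤ 1` and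
`t i = f i (y i)`, then `1 - φ y` dominates the sum of the coordinatewise Young defects, of the
coordinatewise losses `‖y i‖ - f i (y i)`, and of the part of `y` lying outside `F`. -/
lemma sum_youngGap_le {I : Type*} [DecidableEq I] (X : I → Type*) [∀ i, NormedAddCommGroup (X i)]
    [∀ i, NormedSpace ℝ (X i)] (p : ℝ≥0∞) [Fact (1 ≤ p)] (hp : 1 < p.toReal) (F : Finset I)
    (a t : I → ℝ)
    (ha : ∑ i ∈ F, a i ^ p.toReal ≤ 1) (y : lp X p) (hy : ‖y‖ ≤ 1) :
    ∑ i ∈ F, (youngGap p.toReal (a i) ‖y i‖ + a i ^ (p.toReal - 1) * (‖y i‖ - t i)) +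
      ‖y - ∑ i ∈ F, lp.single p i (y i)‖ ^ p.toReal / p.toReal ≤
      1 - ∑ i ∈ F, a i ^ (p.toReal - 1) * t i := by
  have hp0 : 0 < p.toReal := by linarith
  rw [lp.norm_compl_sum_single hp0]
  have hyp : ‖y‖ ^ p.toReal ≤ 1 := Real.rpow_le_one (norm_nonneg _) hy hp0.le
  have hsum : ∑ i ∈ F, (youngGap p.toReal (a i) ‖y i‖ + a i ^ (p.toReal - 1) * (‖y i‖ - t i)) =
      (1 - 1 / p.toReal) * ∑ i ∈ F, a i ^ p.toReal + (∑ i ∈ F, ‖y i‖ ^ p.toReal) / p.toReal -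
        ∑ i ∈ F, a i ^ (p.toReal - 1) * t i := by
    rw [Finset.mul_sum, Finset.sum_div, ← Finset.sum_add_distrib, ← Finset.sum_sub_distrib]
    refine Finset.sum_congr rfl fun i _ => ?_
    unfold youngGap
    ring
  rw [hsum, sub_div]
  have h1 : (1 - 1 / p.toReal) * ∑ i ∈ F, a i ^ p.toReal ≤ 1 - 1 / p.toReal := by
    refine mul_le_of_le_one_right ?_ ha
    rw [sub_nonneg, div_le_one hp0]
    exact hp.le
  have h2 : ‖y‖ ^ p.toReal / p.toReal ≤ 1 / p.toReal := by gcongr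
  linarith

/-- Each coordinate of a point nearly maximising `φ = ∑ i ∈ F, a i ^ (p - 1) • f i` on the unit
ball has a small Young defect and is nearly normed by `f i`, and the part of the point outside `F`
is small. Here `t i` stands for `f i (y i)`. -/
lemma coord_gap_le {I : Type*} [DecidableEq I] (X : I → Type*) [∀ i, NormedAddCommGroup (X i)]
    [∀ i, NormedSpace ℝ (X i)] (p : ℝ≥0∞) [Fact (1 ≤ p)] (hp : 1 < p.toReal) (F : Finset I)
    (a t : I → ℝ)
    (ha0 : ∀ i ∈ F, 0 ≤ a i) (ha : ∑ i ∈ F, a i ^ p.toReal ≤ 1) (y : lp X p) (hy : ‖y‖ ≤ 1)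
    (ht : ∀ i ∈ F, t i ≤ ‖y i‖) {δ : ℝ} (hδ : 1 - δ ≤ ∑ i ∈ F, a i ^ (p.toReal - 1) * t i) :
    (∀ i ∈ F, youngGap p.toReal (a i) ‖y i‖ ≤ δ ∧
      a i ^ (p.toReal - 1) * (‖y i‖ - t i) ≤ δ) ∧
    ‖y - ∑ i ∈ F, lp.single p i (y i)‖ ^ p.toReal / p.toReal ≤ δ := by
  have hp0 : 0 < p.toReal := by linarith
  have h := sum_youngGap_le X p hp F a t ha y hy
  have hA : ∀ i ∈ F, 0 ≤ youngGap p.toReal (a i) ‖y i‖ := fun i hi =>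
    youngGap_nonneg hp (ha0 i hi) (norm_nonneg _)
  have hB : ∀ i ∈ F, 0 ≤ a i ^ (p.toReal - 1) * (‖y i‖ - t i) := fun i hi =>
    mul_nonneg (Real.rpow_nonneg (ha0 i hi) _) (sub_nonneg.2 (ht i hi))
  have hC : 0 ≤ ‖y - ∑ i ∈ F, lp.single p i (y i)‖ ^ p.toReal / p.toReal := by positivity
  have hS : ∀ i ∈ F, 0 ≤ youngGap p.toReal (a i) ‖y i‖ +
      a i ^ (p.toReal - 1) * (‖y i‖ - t i) := fun i hi => add_nonneg (hA i hi) (hB i hi)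
  refine ⟨fun i hi => ?_, ?_⟩
  · have := Finset.single_le_sum hS hi
    have := hA i hi
    have := hB i hi
    constructor <;> linarith
  · have := Finset.sum_nonneg hS
    linarith

/-! ### Control of one coordinate -/

/-- Slices at an almost preserved extreme point `u` can be taken with a norm-one functional `f`,
in the form `{v ∈ B : 1 - δ < f v}`. -/
lemma exists_unit_slice {E : Type*} [NormedAddCommGroup E] [NormedSpace ℝ E] {u : E}
    (hu1 : ‖u‖ = 1) (hu : u ∈ ape (closedBall (0 : E) 1)) (G : Finset (E →L[ℝ] ℝ)) {ε : ℝ}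
    (hε : 0 < ε) :
    ∃ f : E →L[ℝ] ℝ, ‖f‖ = 1 ∧ ∃ δ > 0, ∀ v, ‖v‖ ≤ 1 → 1 - δ < f v →
      ∀ g ∈ G, |g v - g u| < ε := by
  obtain ⟨f, c, ⟨y, hy, hyf⟩, hf⟩ := ((mem_ape_ball_iff u).1 hu).2 G ε hε
  have hcf : c < ‖f‖ := hyf.trans_le ((le_abs_self _).trans (f.unit_le_opNorm y hy))
  rcases (norm_nonneg f).eq_or_lt with h0 | h0
  -- For `f = 0` the slice is the whole ball, so any norm-one functional will do.
  · obtain ⟨g, hg, -⟩ := exists_dual_vector ℝ u (by simp [hu1])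
    have hf0 : f = 0 := norm_eq_zero.1 h0.symm
    refine ⟨g, hg, 1, one_pos, fun v hv _ => hf v hv ?_⟩
    simpa [hf0] using hcf
  · refine ⟨‖f‖⁻¹ • f, by rw [norm_smul, norm_inv, norm_norm, inv_mul_cancel₀ h0.ne'],
      1 - c / ‖f‖, by rw [gt_iff_lt, sub_pos, div_lt_one h0]; exact hcf, fun v hv hvf => ?_⟩
    refine hf v hv ?_
    simp only [sub_sub_cancel, smul_apply, smul_eq_mul] at hvf
    rwa [inv_mul_eq_div, div_lt_div_iff_of_pos_right h0] at hvf

/-- Coordinatewise control: at an almost preserved extreme point `u` there is a norm-one `f` such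
that, whenever the Young defect of `a` and `‖w‖` is small and `f` nearly norms `w`, the vector `w`
is weakly close to `a • u`. -/
lemma exists_coord_control {E : Type*} [NormedAddCommGroup E] [NormedSpace ℝ E] {u : E}
    (hu1 : ‖u‖ = 1) (hu : u ∈ ape (closedBall (0 : E) 1)) {p a : ℝ} (hp : 1 < p) (ha : 0 < a)
    (G : Finset (E →L[ℝ] ℝ)) {ε : ℝ} (hε : 0 < ε) :
    ∃ f : E →L[ℝ] ℝ, ‖f‖ = 1 ∧ ∃ δ > 0, ∀ w, ‖w‖ ≤ 1 → youngGap p a ‖w‖ ≤ δ →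
      a ^ (p - 1) * (‖w‖ - f w) ≤ δ → ∀ g ∈ G, |g w - g (a • u)| < ε := by
  obtain ⟨f, hf1, δ₀, hδ₀, hf⟩ := exists_unit_slice hu1 hu G (ε := ε / (2 * a)) (by positivity)
  set M : ℝ := ∑ g ∈ G, ‖g‖ + 1 with hM
  have hMpos : 0 < M := by positivity
  obtain ⟨δ₁, hδ₁, hst⟩ := exists_youngGap_stable hp ha (η := min (a / 2) (ε / (2 * M)))
    (by positivity)
  have hap : 0 < a ^ (p - 1) := Real.rpow_pos_of_pos ha _
  refine ⟨f, hf1, min δ₁ (a ^ (p - 1) * (δ₀ * a / 4)), by positivity,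
    fun w hw hgap hloss g hg => ?_⟩
  have hr := hst _ (norm_nonneg w) hw (hgap.trans (min_le_left _ _))
  have hr1 := hr.trans_le (min_le_left _ _)
  have hr2 := hr.trans_le (min_le_right _ _)
  have hloss' : ‖w‖ - f w ≤ δ₀ * a / 4 :=
    le_of_mul_le_mul_left (hloss.trans (min_le_right _ _)) hap
  have hra : a / 2 < ‖w‖ := by linarith [(abs_lt.1 hr1).1]
  have hrpos : 0 < ‖w‖ := by linarith
  set v : E := ‖w‖⁻¹ • w with hv
  have hv1 : ‖v‖ ≤ 1 := by
    rw [hv, norm_smul, norm_inv, norm_norm, inv_mul_cancel₀ hrpos.ne']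
  have hwv : w = ‖w‖ • v := by rw [hv, smul_smul, mul_inv_cancel₀ hrpos.ne', one_smul]
  have hfv : 1 - δ₀ < f v := by
    rw [hv, map_smul, smul_eq_mul, inv_mul_eq_div, lt_div_iff₀ hrpos]
    nlinarith
  have hgv := hf v hv1 hfv g hg
  have hgM : |g v| ≤ M := by
    have h1 : |g v| ≤ ‖g‖ := g.unit_le_opNorm v hv1
    have h2 := Finset.single_le_sum (f := fun g : E →L[ℝ] ℝ => ‖g‖)
      (fun _ _ => norm_nonneg _) hg
    linarith
  have e : g w - g (a • u) = (‖w‖ - a) * g v + a * (g v - g u) := by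
    conv_lhs => rw [hwv]
    simp only [map_smul, smul_eq_mul]
    ring
  rw [e]
  calc |(‖w‖ - a) * g v + a * (g v - g u)|
      ≤ |‖w‖ - a| * |g v| + a * |g v - g u| := by
        refine (abs_add_le _ _).trans (le_of_eq ?_)
        rw [abs_mul, abs_mul, abs_of_pos ha]
    _ ≤ ε / (2 * M) * M + a * |g v - g u| := by gcongr
    _ < ε / (2 * M) * M + a * (ε / (2 * a)) := by gcongr
    _ = ε := by field_simp; ring

lemma exists_lt_apply {E : Type*} [NormedAddCommGroup E] [NormedSpace ℝ E] {f : E →L[ℝ] ℝ}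
    (hf : ‖f‖ = 1) {s : ℝ} (hs : s < 1) : ∃ v, ‖v‖ ≤ 1 ∧ s < f v := by
  obtain ⟨v, hv, hvf⟩ := f.exists_lt_apply_of_lt_opNorm (hf ▸ hs)
  rw [Real.norm_eq_abs, lt_abs] at hvf
  rcases hvf with h | h
  · exact ⟨v, hv.le, h⟩
  · exact ⟨-v, by simpa using hv.le, by simpa using h⟩

lemma evalCLM_apply {I : Type*} {X : I → Type*} [∀ i, NormedAddCommGroup (X i)]
    [∀ i, NormedSpace ℝ (X i)] {p : ℝ≥0∞} [Fact (1 ≤ p)] (i : I) (y : lp X p) :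
    lp.evalCLM ℝ X p i y = y i := rfl

lemma sum_single_apply {I : Type*} [DecidableEq I] {X : I → Type*}
    [∀ i, NormedAddCommGroup (X i)] {p : ℝ≥0∞} {F : Finset I} (z : ∀ i, X i) {i : I}
    (hi : i ∈ F) :
    (∑ j ∈ F, lp.single p j (z j) : lp X p) i = z i := by
  rw [lp.coeFn_sum, Finset.sum_apply]
  simp [Finset.sum_pi_single, hi]

lemma norm_sum_single_le_one {I : Type*} [DecidableEq I] {X : I → Type*}
    [∀ i, NormedAddCommGroup (X i)] {p : ℝ≥0∞} [Fact (1 ≤ p)] (hp : 1 < p.toReal) {F : Finset I}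
    {a : I → ℝ}
    (ha : ∑ i ∈ F, a i ^ p.toReal ≤ 1) (z : ∀ i, X i) (hz : ∀ i ∈ F, ‖z i‖ ≤ a i) :
    ‖(∑ j ∈ F, lp.single p j (z j) : lp X p)‖ ≤ 1 := by
  have hp0 : 0 < p.toReal := by linarith
  rw [← Real.rpow_le_rpow_iff (norm_nonneg _) zero_le_one hp0, lp.norm_sum_single hp0,
    Real.one_rpow]
  refine le_trans (Finset.sum_le_sum fun i hi => ?_) ha
  exact Real.rpow_le_rpow (norm_nonneg _) (hz i hi) hp0.le

/-! ### The two implications -/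

section Sum

variable {I : Type*} [DecidableEq I] {X : I → Type*} [∀ i, NormedAddCommGroup (X i)]
  [∀ i, NormedSpace ℝ (X i)] {p : ℝ≥0∞} [Fact (1 ≤ p)]

/-- Finitely supported points of the sphere whose normalised coordinates are almost preserved
extreme points are themselves almost preserved extreme points. -/
lemma sum_single_mem_ape (hp : 1 < p.toReal) {F : Finset I} {a : I → ℝ} {u : ∀ i, X i}
    (ha0 : ∀ i ∈ F, 0 < a i) (ha : ∑ i ∈ F, a i ^ p.toReal = 1)
    (hu1 : ∀ i ∈ F, ‖u i‖ = 1) (hu : ∀ i ∈ F, u i ∈ ape (closedBall (0 : X i) 1)) :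
    (∑ i ∈ F, lp.single p i (a i • u i) : lp X p) ∈ ape (closedBall (0 : lp X p) 1) := by
  classical
  have hp0 : 0 < p.toReal := by linarith
  rw [mem_ape_ball_iff]
  refine ⟨norm_sum_single_le_one hp ha.le _ fun i hi => ?_, fun G ε hε => ?_⟩
  · rw [norm_smul, hu1 i hi, mul_one, Real.norm_of_nonneg (ha0 i hi).le]
  set M : ℝ := ∑ g ∈ G, ‖g‖ + 1 with hM
  have hMpos : 0 < M := by positivity
  set ε₁ : ℝ := ε / (2 * (F.card + 1)) with hε₁
  have hε₁pos : 0 < ε₁ := by positivity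
  have key : ∀ i, ∃ f : X i →L[ℝ] ℝ, i ∈ F → ‖f‖ = 1 ∧ ∃ δ > 0, ∀ w, ‖w‖ ≤ 1 →
      youngGap p.toReal (a i) ‖w‖ ≤ δ → a i ^ (p.toReal - 1) * (‖w‖ - f w) ≤ δ →
      ∀ g ∈ G, |g (lp.single p i w) - g (lp.single p i (a i • u i))| < ε₁ := by
    intro i
    by_cases hi : i ∈ F
    · obtain ⟨f, hf, δ, hδ, h⟩ := exists_coord_control (hu1 i hi) (hu i hi) hp (ha0 i hi)
        (G.image fun g => g.comp (lp.singleContinuousLinearMap ℝ X p i)) hε₁pos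
      refine ⟨f, fun _ => ⟨hf, δ, hδ, fun w h1 h2 h3 g hg => ?_⟩⟩
      exact h w h1 h2 h3 _ (Finset.mem_image_of_mem _ hg)
    · exact ⟨0, fun h => absurd h hi⟩
  choose f hf using key
  have hev : ∀ᶠ δ in 𝓝[>] (0 : ℝ), ∀ i ∈ F, ∀ w, ‖w‖ ≤ 1 →
      youngGap p.toReal (a i) ‖w‖ ≤ δ → a i ^ (p.toReal - 1) * (‖w‖ - f i w) ≤ δ →
      ∀ g ∈ G, |g (lp.single p i w) - g (lp.single p i (a i • u i))| < ε₁ := by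
    rw [Filter.eventually_all_finset]
    intro i hi
    obtain ⟨-, δ₀, hδ₀, h⟩ := hf i hi
    filter_upwards [Ioo_mem_nhdsGT hδ₀] with δ hδ w h1 h2 h3
    exact h w h1 (h2.trans hδ.2.le) (h3.trans hδ.2.le)
  have hτ : 0 < (ε / (2 * M)) ^ p.toReal / p.toReal :=
    div_pos (Real.rpow_pos_of_pos (by positivity) _) hp0
  obtain ⟨δ, hδ, hδ0, hδτ⟩ := (hev.and (Ioo_mem_nhdsGT hτ)).exists
  set Φ : lp X p →L[ℝ] ℝ :=
    ∑ i ∈ F, (a i ^ (p.toReal - 1)) • (f i).comp (lp.evalCLM ℝ X p i) with hΦ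
  have hΦapp : ∀ y : lp X p, Φ y = ∑ i ∈ F, a i ^ (p.toReal - 1) * f i (y i) := by
    intro y
    simp [hΦ, evalCLM_apply]
  refine ⟨Φ, 1 - δ, ?_, fun y hy hyΦ g hg => ?_⟩
  · have hv : ∀ i, ∃ v : X i, i ∈ F → ‖v‖ ≤ 1 ∧ 1 - δ < f i v := by
      intro i
      by_cases hi : i ∈ F
      · obtain ⟨v, hv⟩ := exists_lt_apply (hf i hi).1 (s := 1 - δ) (by linarith)
        exact ⟨v, fun _ => hv⟩
      · exact ⟨0, fun h => absurd h hi⟩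
    choose v hv using hv
    refine ⟨∑ i ∈ F, lp.single p i (a i • v i),
      norm_sum_single_le_one hp ha.le _ fun i hi => ?_, ?_⟩
    · rw [norm_smul, Real.norm_of_nonneg (ha0 i hi).le]
      exact mul_le_of_le_one_right (ha0 i hi).le (hv i hi).1
    · have hne : F.Nonempty := by
        rw [Finset.nonempty_iff_ne_empty]
        rintro rfl
        simp at ha
      rw [hΦapp]
      calc 1 - δ = ∑ i ∈ F, a i ^ p.toReal * (1 - δ) := by rw [← Finset.sum_mul, ha, one_mul]
        _ < ∑ i ∈ F, a i ^ p.toReal * f i (v i) := by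
          refine Finset.sum_lt_sum_of_nonempty hne fun i hi => ?_
          exact mul_lt_mul_of_pos_left (hv i hi).2 (Real.rpow_pos_of_pos (ha0 i hi) _)
        _ = _ := by
          refine Finset.sum_congr rfl fun i hi => ?_
          rw [sum_single_apply (fun i => a i • v i) hi, map_smul, smul_eq_mul, ← mul_assoc,
            ← Real.rpow_add_one (ha0 i hi).ne', sub_add_cancel]
  · rw [hΦapp] at hyΦ
    have hyi : ∀ i, ‖y i‖ ≤ 1 := fun i =>
      (lp.norm_apply_le_norm (zero_lt_one.trans_le Fact.out).ne' y i).trans hy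
    obtain ⟨hco, htail⟩ := coord_gap_le X p hp F a (fun i => f i (y i))
      (fun i hi => (ha0 i hi).le) ha.le y hy
      (fun i hi => (le_abs_self _).trans (((f i).le_of_opNorm_le (hf i hi).1.le (y i)).trans_eq
        (one_mul _))) hyΦ.le
    set T := y - ∑ i ∈ F, lp.single p i (y i) with hT
    have hTn : ‖T‖ < ε / (2 * M) := by
      rw [← Real.rpow_lt_rpow_iff (norm_nonneg _) (by positivity) hp0]
      exact (div_lt_div_iff_of_pos_right hp0).1 (htail.trans_lt hδτ)
    have hgM : ‖g‖ ≤ M := by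
      have h2 := Finset.single_le_sum (f := fun g : lp X p →L[ℝ] ℝ => ‖g‖)
        (fun _ _ => norm_nonneg _) hg
      linarith
    have e : g y - g (∑ i ∈ F, lp.single p i (a i • u i)) =
        g T + ∑ i ∈ F, (g (lp.single p i (y i)) - g (lp.single p i (a i • u i))) := by
      rw [hT, map_sub, map_sum, map_sum, Finset.sum_sub_distrib]
      ring
    rw [e]
    have h1 : |g T| ≤ M * (ε / (2 * M)) :=
      (g.le_opNorm T).trans (mul_le_mul hgM hTn.le (norm_nonneg _) hMpos.le)
    have h2 : |∑ i ∈ F, (g (lp.single p i (y i)) - g (lp.single p i (a i • u i)))| ≤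
        F.card * ε₁ := by
      refine (Finset.abs_sum_le_sum_abs _ _).trans ?_
      rw [← nsmul_eq_mul]
      refine Finset.sum_le_card_nsmul _ _ _ fun i hi => ?_
      exact (hδ i hi _ (hyi i) (hco i hi).1 (hco i hi).2 g hg).le
    have h3 : M * (ε / (2 * M)) = ε / 2 := by field_simp
    have h4 : (F.card + 1) * ε₁ = ε / 2 := by rw [hε₁]; field_simp
    linarith [abs_add_le (g T)
      (∑ i ∈ F, (g (lp.single p i (y i)) - g (lp.single p i (a i • u i))))]

/-- The implication from coordinates to the sum: normalised finite truncations of `x` are almost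
preserved extreme points and converge to `x`. -/
lemma mem_ape_of_forall_coord (hp : 1 < p.toReal) (hp2 : p ≠ ⊤) {x : lp X p} (hx : ‖x‖ = 1)
    (h : ∀ i, x i = 0 ∨ ‖x i‖⁻¹ • x i ∈ ape (closedBall (0 : X i) 1)) :
    x ∈ ape (closedBall (0 : lp X p) 1) := by
  classical
  have hp0 : 0 < p.toReal := by linarith
  rw [mem_ape_ball_iff]
  refine ⟨hx.le, fun G ε hε => ?_⟩
  have hlim := lp.hasSum_single hp2 x
  rw [HasSum] at hlim
  have hnorm := hlim.norm
  have hlim' := (hnorm.inv₀ (by simp [hx])).smul hlim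
  rw [hx, inv_one, one_smul] at hlim'
  have hev : ∀ᶠ F : Finset I in Filter.atTop, ∀ g ∈ G,
      |g (‖∑ i ∈ F, lp.single p i (x i)‖⁻¹ • ∑ i ∈ F, lp.single p i (x i)) - g x| < ε / 2 := by
    rw [Filter.eventually_all_finset]
    intro g _
    have := (g.continuous.tendsto x).comp hlim'
    exact (Metric.tendsto_nhds.1 this) (ε / 2) (by positivity)
  have hpos : ∀ᶠ F : Finset I in Filter.atTop, 0 < ‖∑ i ∈ F, lp.single p i (x i)‖ :=
    hnorm.eventually (lt_mem_nhds (by simp [hx]))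
  obtain ⟨F, hFG, hF0⟩ := (hev.and hpos).exists
  set N : ℝ := ‖∑ i ∈ F, lp.single p i (x i)‖ with hN
  have hNp : ∑ i ∈ F, ‖x i‖ ^ p.toReal = N ^ p.toReal := (lp.norm_sum_single hp0 _ _).symm
  have hmem := sum_single_mem_ape (p := p) hp (F := F.filter fun i => x i ≠ 0)
    (a := fun i => N⁻¹ * ‖x i‖) (u := fun i => ‖x i‖⁻¹ • x i)
    (fun i hi => by
      have : 0 < ‖x i‖ := norm_pos_iff.2 (Finset.mem_filter.1 hi).2
      positivity)
    (by
      rw [Finset.sum_filter_of_ne]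
      · have : ∀ i ∈ F, (N⁻¹ * ‖x i‖) ^ p.toReal = N⁻¹ ^ p.toReal * ‖x i‖ ^ p.toReal :=
          fun i _ => Real.mul_rpow (by positivity) (norm_nonneg _)
        rw [Finset.sum_congr rfl this, ← Finset.mul_sum, hNp,
          ← Real.mul_rpow (by positivity) hF0.le, inv_mul_cancel₀ hF0.ne', Real.one_rpow]
      · intro i _ hne h0
        exact hne (by simp [h0, Real.zero_rpow hp0.ne']))
    (fun i hi => by
      have : ‖x i‖ ≠ 0 := norm_ne_zero_iff.2 (Finset.mem_filter.1 hi).2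
      rw [norm_smul, norm_inv, norm_norm, inv_mul_cancel₀ this])
    (fun i hi => (h i).resolve_left (Finset.mem_filter.1 hi).2)
  have heq : (∑ i ∈ F.filter (fun i => x i ≠ 0),
      lp.single p i ((N⁻¹ * ‖x i‖) • (‖x i‖⁻¹ • x i)) : lp X p) =
      N⁻¹ • ∑ i ∈ F, lp.single p i (x i) := by
    rw [Finset.smul_sum, ← Finset.sum_filter_of_ne (s := F) (p := fun i => x i ≠ 0)
      (f := fun i => N⁻¹ • lp.single p i (x i))]
    · refine Finset.sum_congr rfl fun i hi => ?_
      have : ‖x i‖ ≠ 0 := norm_ne_zero_iff.2 (Finset.mem_filter.1 hi).2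
      rw [smul_smul, mul_assoc, mul_inv_cancel₀ this, mul_one, lp.single_smul]
    · intro i _ hne h0
      exact hne (by rw [h0, lp.single_zero, smul_zero])
  rw [heq] at hmem
  obtain ⟨f, c, hy, hf⟩ := ((mem_ape_ball_iff _).1 hmem).2 G (ε / 2) (by positivity)
  refine ⟨f, c, hy, fun y hy hyc g hg => ?_⟩
  have h1 := hf y hy hyc g hg
  have h2 := hFG g hg
  have := abs_sub_le (g y) (g (N⁻¹ • ∑ i ∈ F, lp.single p i (x i))) (g x)
  linarith

/-- The implication from the sum to a coordinate `i`: a slice of the ball of the sum on which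
`‖y i‖` is almost constant restricts, by moving only the `i`-th coordinate of one of its points,
to a slice of the ball of `X i`. -/
lemma coord_mem_ape (hp : 1 < p.toReal) {x : lp X p} (hx : ‖x‖ = 1)
    (h : x ∈ ape (closedBall (0 : lp X p) 1)) {i : I} (hi : x i ≠ 0) :
    ‖x i‖⁻¹ • x i ∈ ape (closedBall (0 : X i) 1) := by
  classical
  have hp0 : 0 < p.toReal := by linarith
  set a : ℝ := ‖x i‖ with ha
  have hapos : 0 < a := norm_pos_iff.2 hi
  rw [mem_ape_ball_iff]
  refine ⟨by rw [norm_smul, norm_inv, Real.norm_of_nonneg hapos.le, ← ha,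
    inv_mul_cancel₀ hapos.ne'], fun G ε hε => ?_⟩
  set M : ℝ := ∑ g ∈ G, ‖g‖ + 1 with hM
  have hMpos : 0 < M := by positivity
  obtain ⟨δ, hδ, hst⟩ := exists_youngGap_stable hp hapos
    (η := min (a / 2) (ε * a / (2 * M))) (by positivity)
  have hsum := lp.hasSum_norm hp0 x
  rw [hx, Real.one_rpow, HasSum] at hsum
  obtain ⟨F, hF, hiF⟩ := ((hsum.eventually (lt_mem_nhds (show 1 - δ / 2 < 1 by linarith))).and
    (Filter.eventually_ge_atTop {i})).exists
  rw [Finset.singleton_subset_iff] at hiF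
  choose k hk1 hk using fun j => exists_dual_vector'' ℝ (x j)
  have hF1 : ∑ j ∈ F, ‖x j‖ ^ p.toReal ≤ 1 := by
    simpa [hx] using lp.sum_rpow_le_norm_rpow hp0 x F
  set Φ : lp X p →L[ℝ] ℝ :=
    ∑ j ∈ F, (‖x j‖ ^ (p.toReal - 1)) • (k j).comp (lp.evalCLM ℝ X p j) with hΦ
  have hΦapp : ∀ y : lp X p, Φ y = ∑ j ∈ F, ‖x j‖ ^ (p.toReal - 1) * k j (y j) := by
    intro y
    simp [hΦ, evalCLM_apply]
  have hΦx : 1 - δ / 2 < Φ x := by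
    rw [hΦapp]
    refine hF.trans_eq (Eq.symm ?_)
    refine Finset.sum_congr rfl fun j _ => ?_
    rw [hk]
    rcases eq_or_ne (‖x j‖) 0 with h0 | h0
    · simp [h0, Real.zero_rpow hp0.ne']
    · simp [← Real.rpow_add_one h0]
  obtain ⟨Ψ, c, ⟨y₀, hy₀, hy₀c⟩, hΨ⟩ := ((mem_ape_ball_iff x).1 h).2
    (insert Φ (G.image fun g => g.comp (lp.evalCLM ℝ X p i))) (min (δ / 2) (ε * a / 2))
    (by positivity)
  have hr := hst ‖y₀ i‖ (norm_nonneg _)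
    ((lp.norm_apply_le_norm (zero_lt_one.trans_le Fact.out).ne' y₀ i).trans hy₀) (by
      have h1 := (hΨ y₀ hy₀ hy₀c Φ (Finset.mem_insert_self _ _)).trans_le (min_le_left _ _)
      have h2 := (abs_lt.1 h1).1
      have h3 : 1 - δ ≤ Φ y₀ := by linarith
      rw [hΦapp] at h3
      exact ((coord_gap_le X p hp F (fun j => ‖x j‖) (fun j => k j (y₀ j))
        (fun j _ => norm_nonneg _) hF1 y₀ hy₀
        (fun j _ => (le_abs_self _).trans (((k j).le_of_opNorm_le (hk1 j) (y₀ j)).trans_eq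
        (one_mul _))) h3).1 i hiF).1)
  set r : ℝ := ‖y₀ i‖ with hrdef
  have hr1 := hr.trans_le (min_le_left _ _)
  have hr2 := hr.trans_le (min_le_right _ _)
  have hrpos : 0 < r := by linarith [(abs_lt.1 hr1).1]
  -- `Y v` is `y₀` with its `i`-th coordinate replaced by `r • v`.
  set Y : X i → lp X p := fun v => y₀ - lp.single p i (y₀ i) + lp.single p i (r • v) with hY
  have hYi : ∀ v, Y v i = r • v := fun v => by
    change y₀ i - lp.single p i (y₀ i) i + lp.single p i (r • v) i = _
    rw [lp.single_apply_self, lp.single_apply_self, sub_self, zero_add]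
  have hYj : ∀ v j, j ≠ i → Y v j = y₀ j := fun v j hj => by
    change y₀ j - lp.single p i (y₀ i) j + lp.single p i (r • v) j = _
    rw [lp.single_apply_ne _ _ _ hj, lp.single_apply_ne _ _ _ hj, sub_zero, add_zero]
  have hYn : ∀ v, ‖v‖ ≤ 1 → ‖Y v‖ ≤ 1 := by
    intro v hv
    refine le_trans (lp.norm_mono (zero_lt_one.trans_le Fact.out).ne' fun j => ?_) hy₀
    rcases eq_or_ne j i with rfl | hj
    · rw [hYi, norm_smul, Real.norm_of_nonneg hrpos.le]
      exact mul_le_of_le_one_right hrpos.le hv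
    · rw [hYj v j hj]
  set f : X i →L[ℝ] ℝ := r • Ψ.comp (lp.singleContinuousLinearMap ℝ X p i) with hf
  have hΨY : ∀ v, Ψ (Y v) = Ψ y₀ - Ψ (lp.single p i (y₀ i)) + f v := fun v => by
    simp [hY, hf]
  refine ⟨f, c - (Ψ y₀ - Ψ (lp.single p i (y₀ i))), ⟨r⁻¹ • y₀ i, ?_, ?_⟩, fun v hv hvf g hg => ?_⟩
  · rw [norm_smul, norm_inv, Real.norm_of_nonneg hrpos.le, ← hrdef, inv_mul_cancel₀ hrpos.ne']
  · have : f (r⁻¹ • y₀ i) = Ψ (lp.single p i (y₀ i)) := by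
      simp [hf, hrpos.ne']
    rw [this]
    linarith
  · have hg1 := (hΨ (Y v) (hYn v hv) (by rw [hΨY]; linarith) _
      (Finset.mem_insert_of_mem (Finset.mem_image_of_mem _ hg))).trans_le (min_le_right _ _)
    have hg2 : |r * g v - g (x i)| < ε * a / 2 := by
      have e1 : (g.comp (lp.evalCLM ℝ X p i)) (Y v) = r * g v := by
        simp [evalCLM_apply, hYi]
      have e2 : (g.comp (lp.evalCLM ℝ X p i)) x = g (x i) := rfl
      rwa [e1, e2] at hg1
    have hgM : |g v| ≤ M := by
      have h1 : |g v| ≤ ‖g‖ := g.unit_le_opNorm v hv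
      have h2 := Finset.single_le_sum (f := fun g : X i →L[ℝ] ℝ => ‖g‖)
        (fun _ _ => norm_nonneg _) hg
      linarith
    have e : a * (g v - g (a⁻¹ • x i)) = (r * g v - g (x i)) - (r - a) * g v := by
      rw [map_smul, smul_eq_mul]
      field_simp
      ring
    have h5 : |(r - a) * g v| ≤ ε * a / 2 := by
      rw [abs_mul]
      calc |r - a| * |g v| ≤ ε * a / (2 * M) * M := by gcongr
        _ = ε * a / 2 := by field_simp
    have h6 : a * |g v - g (a⁻¹ • x i)| < a * ε := by
      rw [← abs_of_pos hapos, ← abs_mul, abs_of_pos hapos, e]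
      calc _ ≤ |r * g v - g (x i)| + |(r - a) * g v| := abs_sub _ _
        _ < a * ε := by linarith
    exact lt_of_mul_lt_mul_left h6 hapos.le

end Sum

/-- Let `1 < p < ∞` and let `X = (⊕ᵢ Xᵢ)_{ℓ_p}` be the ℓ_p-sum of a family
of real Banach spaces. A point `x` of the unit sphere of `X` is an almost preserved extreme
point of the closed unit ball if and only if for every `i`, either `x i = 0` or
`x i / ‖x i‖` is an almost preserved extreme point of the closed unit ball of `Xᵢ`. -/
theorem ape_sphere_lp_sum_iff {I : Type*} (X : I → Type*) [∀ i, NormedAddCommGroup (X i)]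
    [∀ i, NormedSpace ℝ (X i)] [∀ i, CompleteSpace (X i)]
    (p : ℝ≥0∞) [Fact (1 ≤ p)] (hp1 : 1 < p) (hp2 : p ≠ ⊤)
    (x : lp X p) (hx : ‖x‖ = 1) :
    x ∈ ape (Metric.closedBall (0 : lp X p) 1) ↔
      ∀ i : I, x i = 0 ∨ ‖x i‖⁻¹ • x i ∈ ape (Metric.closedBall (0 : X i) 1) := by
  classical
  have hp : 1 < p.toReal := by
    rw [← ENNReal.toReal_one]
    exact (ENNReal.toReal_lt_toReal ENNReal.one_ne_top hp2).2 hp1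
  refine ⟨fun h i => ?_, mem_ape_of_forall_coord hp hp2 hx⟩
  exact or_iff_not_imp_left.2 fun hi => coord_mem_ape hp hx h hi
end
end

section
/- Let I be an infinite set and let c₀(I) be the real Banach space of functions x : I → ℝ vanishing at infinity (i.e. for every ε > 0 the set {i ∈ I : |x(i)| ≥ ε} is finite) endowed with the supremum norm. Then the closed unit ball of c₀(I) has no almost preserved extreme points: ape(B_{c₀(I)}) = ∅. -/
/-!
Every `x₀ ∈ c₀(I)` has a coordinate `i` with `|x₀ i| < 1`, because `I` is infinite, so
`U = {x : |x i| < 1}` is a weak neighbourhood of `x₀`. No nonempty slice of the unit ball `B` lies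
in `U`: if `x` belongs to a slice, then `x` is a convex combination of the two points of `B`
obtained by replacing its `i`-th coordinate by `1` and by `-1`, so the defining functional is at
least as large at one of these two points as at `x`. That point lies in the slice but not in `U`.
-/

open Set Metric Topology Bornology

noncomputable section

open ZeroAtInfty

/-- The element of `c₀(I)` that agrees with `x` except for the value `t` at `i`. -/
def czeroUpdate {I : Type*} [TopologicalSpace I] [DiscreteTopology I]
    (x : C₀(I, ℝ)) (i : I) (t : ℝ) : C₀(I, ℝ) :=
  letI := Classical.decEq I
  { toFun := Function.update x i t
    continuous_toFun := continuous_of_discreteTopology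
    zero_at_infty' := by
      refine (zero_at_infty x).congr' ?_
      rw [Filter.cocompact_eq_cofinite]
      filter_upwards [(Set.finite_singleton i).compl_mem_cofinite] with j hj
      exact (Function.update_of_ne hj t x).symm }

lemma czeroUpdate_self {I : Type*} [TopologicalSpace I] [DiscreteTopology I]
    (x : C₀(I, ℝ)) (i : I) (t : ℝ) : czeroUpdate x i t i = t := by
  letI := Classical.decEq I
  change Function.update (x : I → ℝ) i t i = t
  exact Function.update_self i t x

lemma czeroUpdate_of_ne {I : Type*} [TopologicalSpace I] [DiscreteTopology I]
    (x : C₀(I, ℝ)) {i j : I} (h : j ≠ i) (t : ℝ) : czeroUpdate x i t j = x j := by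
  letI := Classical.decEq I
  change Function.update (x : I → ℝ) i t j = x j
  exact Function.update_of_ne h t x

lemma czero_abs_apply_le_norm {I : Type*} [TopologicalSpace I] (x : C₀(I, ℝ)) (i : I) :
    |x i| ≤ ‖x‖ :=
  x.toBCF.norm_coe_le_norm i

lemma norm_czeroUpdate_le {I : Type*} [TopologicalSpace I] [DiscreteTopology I]
    {x : C₀(I, ℝ)} (hx : ‖x‖ ≤ 1) (i : I) {t : ℝ} (ht : |t| ≤ 1) :
    ‖czeroUpdate x i t‖ ≤ 1 := by
  refine (BoundedContinuousFunction.norm_le (f := (czeroUpdate x i t).toBCF) zero_le_one).2 ?_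
  intro j
  change |czeroUpdate x i t j| ≤ 1
  by_cases h : j = i
  · subst h
    rwa [czeroUpdate_self]
  · rw [czeroUpdate_of_ne x h]
    exact (czero_abs_apply_le_norm x j).trans hx

/-- Evaluation at `i`, as a continuous linear functional on `c₀(I)`. -/
def czeroEval {I : Type*} [TopologicalSpace I] (i : I) : C₀(I, ℝ) →L[ℝ] ℝ :=
  LinearMap.mkContinuous
    { toFun := fun x => x i
      map_add' := fun _ _ => rfl
      map_smul' := fun _ _ => rfl } 1
    (fun x => by simpa using czero_abs_apply_le_norm x i)

lemma isOpen_weakTop_abs_apply_lt {I : Type*} [TopologicalSpace I] (i : I) (r : ℝ) :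
    IsOpen[weakTop C₀(I, ℝ)] {x : C₀(I, ℝ) | |x i| < r} := by
  refine isOpen_induced_iff.2 ⟨{φ | |φ (czeroEval i)| < r}, ?_, rfl⟩
  exact isOpen_lt (continuous_apply (czeroEval i)).abs continuous_const

lemma eq_convexCombination_czeroUpdate {I : Type*} [TopologicalSpace I] [DiscreteTopology I]
    (x : C₀(I, ℝ)) (i : I) :
    x = ((1 + x i) / 2) • czeroUpdate x i 1 + ((1 - x i) / 2) • czeroUpdate x i (-1) := by
  ext j
  change x j = (1 + x i) / 2 * czeroUpdate x i 1 j + (1 - x i) / 2 * czeroUpdate x i (-1) j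
  by_cases h : j = i
  · subst h
    rw [czeroUpdate_self, czeroUpdate_self]
    ring
  · rw [czeroUpdate_of_ne x h, czeroUpdate_of_ne x h]
    ring

/-- The coordinate `x i` can be pushed to `1` or `-1` without decreasing a given functional. -/
lemma exists_le_apply_czeroUpdate {I : Type*} [TopologicalSpace I] [DiscreteTopology I]
    (f : C₀(I, ℝ) →L[ℝ] ℝ) {x : C₀(I, ℝ)} (hx : ‖x‖ ≤ 1) (i : I) :
    ∃ t : ℝ, |t| = 1 ∧ f x ≤ f (czeroUpdate x i t) := by
  by_contra! h
  have h₁ := h 1 (by simp)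
  have h₂ := h (-1) (by simp)
  have hxi := abs_le.1 ((czero_abs_apply_le_norm x i).trans hx)
  have hf := congrArg f (eq_convexCombination_czeroUpdate x i)
  rw [map_add, map_smul, map_smul, smul_eq_mul, smul_eq_mul] at hf
  -- The weights are nonnegative with sum `1`, and one of them is positive.
  rcases le_total 0 (x i) with h0 | h0
  · nlinarith [hxi.1, hxi.2]
  · nlinarith [hxi.1, hxi.2]

lemma exists_abs_apply_lt_one {I : Type*} [TopologicalSpace I] [DiscreteTopology I] [Infinite I]
    (x : C₀(I, ℝ)) : ∃ i, |x i| < 1 := by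
  have h := zero_at_infty x
  rw [Filter.cocompact_eq_cofinite] at h
  have h' := h.abs
  rw [abs_zero] at h'
  exact (h'.eventually_lt_const one_pos).exists

/-- For an infinite (discrete) index set `I`, the closed unit ball of
`c₀(I)` — the space of real functions on `I` vanishing at infinity, with the supremum
norm — has no almost preserved extreme points. -/
theorem ape_closedBall_czero_empty {I : Type*} [TopologicalSpace I] [DiscreteTopology I]
    [Infinite I] :
    ape (Metric.closedBall (0 : C₀(I, ℝ)) 1) = ∅ := by
  rw [Set.eq_empty_iff_forall_notMem]
  rintro x₀ ⟨-, hx₀⟩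
  obtain ⟨i, hi⟩ := exists_abs_apply_lt_one x₀
  obtain ⟨f, α, -, ⟨x, hxB, hxα⟩, hsub⟩ := hx₀ _ (isOpen_weakTop_abs_apply_lt i 1) hi
  have hx : ‖x‖ ≤ 1 := mem_closedBall_zero_iff.1 hxB
  obtain ⟨t, ht, hft⟩ := exists_le_apply_czeroUpdate f hx i
  have hU : |czeroUpdate x i t i| < 1 :=
    hsub ⟨mem_closedBall_zero_iff.2 (norm_czeroUpdate_le hx i ht.le), hxα.trans_le hft⟩
  rw [czeroUpdate_self, ht] at hU
  exact lt_irrefl _ hU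
end
end
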